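/- arXiv:1312.7547 — 4 statements merged into one kernel-verified Lean document; each statement's English description precedes it below -/
import Mathlib

section
/- For every triple of matrices E, A ∈ ℝ^{c×n}, B ∈ ℝ^{c×m}, there exists an ODE-LTI (A_l, B_l, C_l, D_l) associated with the DAE d(Ex)/dt = Ax + Bu, and its state dimension n̂ satisfies n̂ ≤ rank E. -/
open MeasureTheory Set Filter Matrix

open Classical in
noncomputable def pinv {α β : Type} [Fintype α] [Fintype β] [DecidableEq α] [DecidableEq β]
    (M : Matrix α β ℝ) : Matrix β α ℝ :=
  if h : ∃ X : Matrix β α ℝ,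
      M * X * M = M ∧ X * M * X = X ∧ (M * X)ᵀ = M * X ∧ (X * M)ᵀ = X * M
  then h.choose else 0

def IsNiceInterval (I : Set ℝ) : Prop :=
  (∃ a b, I = Set.Icc a b) ∨ (∃ a, I = Set.Ici a) ∨ (∃ a, I = Set.Iic a) ∨ I = Set.univ

def IsDAESolution {c n m : ℕ} (E A : Matrix (Fin c) (Fin n) ℝ)
    (B : Matrix (Fin c) (Fin m) ℝ) (I : Set ℝ)
    (x : ℝ → Fin n → ℝ) (u : ℝ → Fin m → ℝ) : Prop :=
  LocallyIntegrableOn x I ∧ LocallyIntegrableOn u I ∧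
  ∀ t₀ ∈ I, ∀ t ∈ I, t₀ ≤ t →
    E.mulVec (x t) = E.mulVec (x t₀) + ∫ s in t₀..t, (A.mulVec (x s) + B.mulVec (u s))

def IsStateTraj {r : ℕ} {σ : Type} [Fintype σ] (Al : Matrix (Fin r) (Fin r) ℝ)
    (Bl : Matrix (Fin r) σ ℝ)
    (I : Set ℝ) (p : ℝ → Fin r → ℝ) (g : ℝ → σ → ℝ) : Prop :=
  LocallyIntegrableOn p I ∧ LocallyIntegrableOn g I ∧
  ∀ t₀ ∈ I, ∀ t ∈ I, t₀ ≤ t →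
    p t = p t₀ + ∫ τ in t₀..t, (Al.mulVec (p τ) + Bl.mulVec (g τ))

def RealizesOn {c n m nh k : ℕ} (E A : Matrix (Fin c) (Fin n) ℝ) (B : Matrix (Fin c) (Fin m) ℝ)
    (Al : Matrix (Fin nh) (Fin nh) ℝ) (Bl : Matrix (Fin nh) (Fin k) ℝ)
    (Cl : Matrix (Fin n ⊕ Fin m) (Fin nh) ℝ) (Dl : Matrix (Fin n ⊕ Fin m) (Fin k) ℝ)
    (I : Set ℝ) : Prop :=
  (∀ x u, IsDAESolution E A B I x u →
    ∃ p g, IsStateTraj Al Bl I p g ∧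
      ∀ᵐ t ∂(volume.restrict I), Sum.elim (x t) (u t) = Cl.mulVec (p t) + Dl.mulVec (g t)) ∧
  (∀ p g, IsStateTraj Al Bl I p g →
    ∃ x u, IsDAESolution E A B I x u ∧
      ∀ᵐ t ∂(volume.restrict I), Sum.elim (x t) (u t) = Cl.mulVec (p t) + Dl.mulVec (g t))

def firstRows {n m nh : ℕ} (Cl : Matrix (Fin n ⊕ Fin m) (Fin nh) ℝ) :
    Matrix (Fin n) (Fin nh) ℝ :=
  Matrix.of fun i j => Cl (Sum.inl i) j

def IsAssociated {c n m nh k : ℕ} (E A : Matrix (Fin c) (Fin n) ℝ)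
    (B : Matrix (Fin c) (Fin m) ℝ)
    (Al : Matrix (Fin nh) (Fin nh) ℝ) (Bl : Matrix (Fin nh) (Fin k) ℝ)
    (Cl : Matrix (Fin n ⊕ Fin m) (Fin nh) ℝ) (Dl : Matrix (Fin n ⊕ Fin m) (Fin k) ℝ) : Prop :=
  nh ≤ n ∧
  ((Dl = 0 ∧ Bl = 0 ∧ k = 1) ∨ Dl.rank = k) ∧
  E * firstRows Dl = 0 ∧ (E * firstRows Cl).rank = nh ∧
  ∀ I : Set ℝ, IsNiceInterval I → RealizesOn E A B Al Bl Cl Dl I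

def ConsistencySet {c n m : ℕ} (E A : Matrix (Fin c) (Fin n) ℝ)
    (B : Matrix (Fin c) (Fin m) ℝ) : Set (Fin c → ℝ) :=
  {z | ∃ I : Set ℝ, IsNiceInterval I ∧ (0 : ℝ) ∈ I ∧
    ∃ x u, IsDAESolution E A B I x u ∧ E.mulVec (x 0) = z}

/-! A DAE is the equation `d(e w)/dt = a w` for the pair of linear maps `e w = E x`,
`a w = A x + B u` of the variable `w = (x, u)`. Let `Z` be the largest subspace such that every
`z ∈ Z` has the form `e w` with `a w ∈ Z`. The span of the values `e (w t)` of a solution on a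
nontrivial interval is such a subspace: differentiating the integral equation puts `a (w t)` into
the span for almost every `t`, and continuity of `e ∘ w` turns the resulting almost everywhere
statement into one at every time. So almost every value of a solution lies in `e⁻¹ Z ∩ a⁻¹ Z`.
As `e` maps this space onto `Z`, it splits as `Z × ker`, and in these coordinates the equation is
the ODE `dp/dt = F (p, g)` with state `p ∈ Z` and free input `g`. -/

section ConsistentSubspace

variable {K V W P U : Type*} [Field K] [AddCommGroup V] [Module K V] [AddCommGroup W] [Module K W]
  [AddCommGroup P] [Module K P] [AddCommGroup U] [Module K U]

/-- A subspace `Z` is consistent for the equation `d(e w)/dt = a w` if every point of `Z` is the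
value `e w` of some `w` whose velocity `a w` stays in `Z`. -/
def IsConsistentSubspace (e a : W →ₗ[K] V) (Z : Submodule K V) : Prop :=
  Z ≤ (Z.comap a).map e

/-- The largest consistent subspace; it is the state space of the associated ODE. -/
def maxConsistentSubspace (e a : W →ₗ[K] V) : Submodule K V :=
  sSup {Z | IsConsistentSubspace e a Z}

/-- The space in which solutions of `d(e w)/dt = a w` take almost all their values. -/
def admissibleSubspace (e a : W →ₗ[K] V) : Submodule K W :=
  (maxConsistentSubspace e a).comap e ⊓ (maxConsistentSubspace e a).comap a

variable {e a : W →ₗ[K] V}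

theorem IsConsistentSubspace.le_maxConsistentSubspace {Z : Submodule K V}
    (hZ : IsConsistentSubspace e a Z) : Z ≤ maxConsistentSubspace e a :=
  le_sSup hZ

theorem isConsistentSubspace_maxConsistentSubspace :
    IsConsistentSubspace e a (maxConsistentSubspace e a) :=
  sSup_le fun _ hZ =>
    hZ.trans (Submodule.map_mono (Submodule.comap_mono hZ.le_maxConsistentSubspace))

variable (e a) in
/-- The map `admissibleSubspace e a → maxConsistentSubspace e a` induced by `e`, sending an
admissible value to its state. -/
def admissibleToState : admissibleSubspace e a →ₗ[K] maxConsistentSubspace e a :=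
  e.restrict fun _ hw => hw.1

variable (e a) in
/-- The map `admissibleSubspace e a → maxConsistentSubspace e a` induced by `a`, sending an
admissible value to its velocity. -/
def admissibleToVelocity : admissibleSubspace e a →ₗ[K] maxConsistentSubspace e a :=
  a.restrict fun _ hw => hw.2

theorem admissibleToState_surjective : Function.Surjective (admissibleToState e a) := by
  rintro ⟨z, hz⟩
  obtain ⟨w, haw, rfl⟩ := isConsistentSubspace_maxConsistentSubspace hz
  exact ⟨⟨w, hz, haw⟩, rfl⟩

theorem exists_linearEquiv_prod_ker {f : W →ₗ[K] V} (hf : Function.Surjective f) :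
    ∃ φ : (V × LinearMap.ker f) ≃ₗ[K] W, ∀ q, f (φ q) = q.1 := by
  obtain ⟨s, hs⟩ := f.exists_rightInverse_of_surjective (LinearMap.range_eq_top.2 hf)
  obtain ⟨ψ, -, hψ⟩ :=
    f.exact_subtype_ker_map.splitSurjectiveEquiv (Submodule.injective_subtype _) ⟨s, hs⟩
  exact ⟨LinearEquiv.prodComm K _ _ ≪≫ₗ ψ.symm, fun q => by simp [hψ]⟩

/-- Coordinates on the admissible subspace: a state in `P`, which is a coordinate vector of the
value of `e`, and a free input in `U`. -/
structure AdmissibleCoordinates (e a : W →ₗ[K] V) (P U : Type*) [AddCommGroup P] [Module K P]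
    [AddCommGroup U] [Module K U] where
  /-- Coordinates on the state space. -/
  state : P ≃ₗ[K] maxConsistentSubspace e a
  /-- Coordinates on the admissible subspace. -/
  value : (P × U) ≃ₗ[K] admissibleSubspace e a
  admissibleToState_value : ∀ q, admissibleToState e a (value q) = state q.1

namespace AdmissibleCoordinates

theorem nonempty_of_linearEquiv (b : P ≃ₗ[K] maxConsistentSubspace e a)
    (d : U ≃ₗ[K] LinearMap.ker (admissibleToState e a)) :
    Nonempty (AdmissibleCoordinates e a P U) := by
  obtain ⟨φ, hφ⟩ := exists_linearEquiv_prod_ker (admissibleToState_surjective (e := e) (a := a))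
  exact ⟨⟨b, b.prodCongr d ≪≫ₗ φ, fun q => by simp [hφ]⟩⟩

theorem exists_finite [FiniteDimensional K V] [FiniteDimensional K W] :
    ∃ r k : ℕ, Nonempty (AdmissibleCoordinates e a (Fin r → K) (Fin k → K)) :=
  ⟨_, _, nonempty_of_linearEquiv (Module.finBasis K _).equivFun.symm
    (Module.finBasis K _).equivFun.symm⟩

variable (R : AdmissibleCoordinates e a P U)

/-- The embedding of the state coordinates into the range of `e`. -/
def stateMap : P →ₗ[K] V :=
  (maxConsistentSubspace e a).subtype ∘ₗ R.state.toLinearMap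

/-- The output map `(C, D)` of the associated ODE. -/
def output : P × U →ₗ[K] W :=
  (admissibleSubspace e a).subtype ∘ₗ R.value.toLinearMap

/-- The right-hand side `(A, B)` of the associated ODE. -/
def dynamics : P × U →ₗ[K] P :=
  R.state.symm.toLinearMap ∘ₗ admissibleToVelocity e a ∘ₗ R.value.toLinearMap

theorem stateMap_injective : Function.Injective R.stateMap :=
  Subtype.val_injective.comp R.state.injective

theorem output_injective : Function.Injective R.output :=
  Subtype.val_injective.comp R.value.injective

theorem range_output : LinearMap.range R.output = admissibleSubspace e a := by
  simp [output, LinearMap.range_comp]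

theorem comp_output_eq_state (q : P × U) : e (R.output q) = R.stateMap q.1 :=
  congrArg Subtype.val (R.admissibleToState_value q)

theorem comp_output_eq_velocity (q : P × U) : a (R.output q) = R.stateMap (R.dynamics q) := by
  simp [output, stateMap, dynamics, admissibleToVelocity]

theorem exists_leftInverse : ∃ (L : V →ₗ[K] P) (T : W →ₗ[K] P × U),
    Function.LeftInverse L R.stateMap ∧ Function.LeftInverse T R.output ∧
      ∀ w, (T w).1 = L (e w) := by
  obtain ⟨L, hL⟩ := R.stateMap.exists_leftInverse_of_injective
    (LinearMap.ker_eq_bot.2 R.stateMap_injective)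
  obtain ⟨T, hT⟩ := R.output.exists_leftInverse_of_injective
    (LinearMap.ker_eq_bot.2 R.output_injective)
  have hL' : Function.LeftInverse L R.stateMap := LinearMap.congr_fun hL
  have hT' : Function.LeftInverse T R.output := LinearMap.congr_fun hT
  refine ⟨L, (L ∘ₗ e).prod (LinearMap.snd K P U ∘ₗ T), hL', fun q => ?_, fun _ => rfl⟩
  ext1
  · simp [R.comp_output_eq_state, hL' q.1]
  · simp [hT' q]

end AdmissibleCoordinates

end ConsistentSubspace

theorem mem_submodule_of_hasDerivAt {F : Type*} [NormedAddCommGroup F] [NormedSpace ℝ F]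
    {Z : Submodule ℝ F} (hZ : IsClosed (Z : Set F)) {f : ℝ → F} {f' : F} {x : ℝ}
    (hf : HasDerivAt f f' x) (hfZ : ∀ᶠ y in nhds x, f y ∈ Z) : f' ∈ Z := by
  refine hZ.mem_of_tendsto hf.tendsto_slope (Filter.Eventually.filter_mono nhdsWithin_le_nhds ?_)
  filter_upwards [hfZ] with y hy
  exact Z.smul_mem _ (Z.sub_mem hy hfZ.self_of_nhds)

theorem ae_restrict_mem_interior_of_ordConnected {I : Set ℝ} (hI : I.OrdConnected) :
    ∀ᵐ t ∂(volume.restrict I), t ∈ interior I := by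
  have hfrontier : ∀ᵐ t, t ∉ frontier I :=
    measure_eq_zero_iff_ae_notMem.1 (hI.convex.addHaar_frontier volume)
  filter_upwards [ae_restrict_of_ae hfrontier, ae_restrict_mem hI.measurableSet] with t ht htI
  by_contra hn
  exact ht ⟨subset_closure htI, hn⟩

theorem ae_mem_of_intervalIntegral_mem {F : Type*} [NormedAddCommGroup F] [NormedSpace ℝ F]
    [CompleteSpace F] {Z : Submodule ℝ F} (hZ : IsClosed (Z : Set F)) {I : Set ℝ}
    (hI : I.OrdConnected) {f : ℝ → F}
    (hf : ∀ s ∈ I, ∀ t ∈ I, IntervalIntegrable f volume s t)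
    (hfZ : ∀ s ∈ I, ∀ t ∈ I, ∫ τ in s..t, f τ ∈ Z) :
    ∀ᵐ t ∂(volume.restrict I), f t ∈ Z := by
  -- Countably many intervals with rational endpoints in `I` cover the interior of `I`.
  have hderiv : ∀ᵐ t, ∀ p q : ℚ, (p : ℝ) ∈ I → (q : ℝ) ∈ I → t ∈ uIcc (p : ℝ) q →
      HasDerivAt (fun y => ∫ τ in t..y, f τ) (f t) t := by
    simp only [ae_all_iff]
    intro p q hp hq
    filter_upwards [(hf p hp q hq).ae_hasDerivAt_integral] with t ht htpq using ht htpq t htpq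
  filter_upwards [ae_restrict_of_ae hderiv, ae_restrict_mem_interior_of_ordConnected hI]
    with t ht htI
  have hnhds : I ∈ nhds t := mem_interior_iff_mem_nhds.1 htI
  obtain ⟨l, u, ⟨hlt, htu⟩, hlu⟩ := mem_nhds_iff_exists_Ioo_subset.1 hnhds
  obtain ⟨p, hlp, hpt⟩ := exists_rat_btwn hlt
  obtain ⟨q, htq, hqu⟩ := exists_rat_btwn htu
  have htderiv := ht p q (hlu ⟨hlp, hpt.trans htu⟩) (hlu ⟨hlt.trans htq, hqu⟩)
    (mem_uIcc_of_le hpt.le htq.le)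
  refine mem_submodule_of_hasDerivAt hZ htderiv ?_
  filter_upwards [hnhds] with y hy using hfZ t (interior_subset htI) y hy

theorem intervalIntegrable_of_locallyIntegrableOn {F : Type*} [NormedAddCommGroup F] {I : Set ℝ}
    (hI : I.OrdConnected) {f : ℝ → F} (hf : LocallyIntegrableOn f I) {s t : ℝ} (hs : s ∈ I)
    (ht : t ∈ I) : IntervalIntegrable f volume s t :=
  (hf.integrableOn_compact_subset (hI.uIcc_subset hs ht) isCompact_uIcc).intervalIntegrable

theorem mem_of_ae_restrict_mem_of_continuousOn {X Y : Type*} [TopologicalSpace X]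
    [MeasurableSpace X] [TopologicalSpace Y] {μ : Measure X} [μ.IsOpenPosMeasure] {s : Set X}
    {C : Set Y} {f : X → Y} (hf : ContinuousOn f s) (hs : s ⊆ closure (interior s))
    (hC : IsClosed C) (hfC : ∀ᵐ x ∂(μ.restrict s), f x ∈ C) {x : X} (hx : x ∈ s) : f x ∈ C := by
  have hopen : IsOpen (interior s ∩ f ⁻¹' Cᶜ) :=
    (hf.mono interior_subset).isOpen_inter_preimage isOpen_interior hC.isOpen_compl
  have hempty : interior s ∩ f ⁻¹' Cᶜ = ∅ :=
    hopen.eq_empty_of_measure_zero <| measure_mono_null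
      (fun y hy (h : y ∈ s → f y ∈ C) => hy.2 (h (interior_subset hy.1)))
      (ae_imp_of_ae_restrict hfC)
  have hmaps : MapsTo f (interior s) C := fun y hy => by
    by_contra hyC
    exact hempty.subset ⟨hy, hyC⟩
  exact hC.closure_subset (((hf x hx).mono interior_subset).mem_closure (hs hx) hmaps)

theorem locallyIntegrableOn_prodMk_iff {X F G : Type*} [MeasurableSpace X] [TopologicalSpace X]
    [NormedAddCommGroup F] [NormedSpace ℝ F] [NormedAddCommGroup G] [NormedSpace ℝ G]
    {μ : Measure X} {s : Set X} {f : X → F} {g : X → G} :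
    LocallyIntegrableOn (fun x => (f x, g x)) s μ ↔
      LocallyIntegrableOn f s μ ∧ LocallyIntegrableOn g s μ := by
  refine ⟨fun h => ⟨(ContinuousLinearMap.fst ℝ F G).locallyIntegrableOn_comp h,
    (ContinuousLinearMap.snd ℝ F G).locallyIntegrableOn_comp h⟩, fun ⟨hf, hg⟩ => ?_⟩
  have hsum : ContinuousLinearMap.inl ℝ F G ∘ f + ContinuousLinearMap.inr ℝ F G ∘ g =
      fun x => (f x, g x) := by
    ext x <;> simp
  exact hsum ▸ ((ContinuousLinearMap.inl ℝ F G).locallyIntegrableOn_comp hf).add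
    ((ContinuousLinearMap.inr ℝ F G).locallyIntegrableOn_comp hg)

section IntegralSolution

variable {V W : Type*} [NormedAddCommGroup V] [NormedSpace ℝ V]
  [NormedAddCommGroup W] [NormedSpace ℝ W]

/-- `w` is a locally integrable solution on `I` of the integrated form of `d(e w)/dt = a w`. -/
structure IsIntegralSolution (e a : W →ₗ[ℝ] V) (I : Set ℝ) (w : ℝ → W) : Prop where
  locallyIntegrableOn : LocallyIntegrableOn w I
  eq_add_integral : ∀ t₀ ∈ I, ∀ t ∈ I, t₀ ≤ t → e (w t) = e (w t₀) + ∫ s in t₀..t, a (w s)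

theorem isIntegralSolution_iff {e a : W →ₗ[ℝ] V} {I : Set ℝ} {w : ℝ → W} :
    IsIntegralSolution e a I w ↔ LocallyIntegrableOn w I ∧
      ∀ t₀ ∈ I, ∀ t ∈ I, t₀ ≤ t → e (w t) = e (w t₀) + ∫ s in t₀..t, a (w s) :=
  ⟨fun h => ⟨h.1, h.2⟩, fun h => ⟨h.1, h.2⟩⟩

namespace IsIntegralSolution

variable {e a : W →ₗ[ℝ] V} {I : Set ℝ} {w : ℝ → W}

theorem integral_eq_sub (hw : IsIntegralSolution e a I w) {s t : ℝ} (hs : s ∈ I) (ht : t ∈ I) :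
    ∫ τ in s..t, a (w τ) = e (w t) - e (w s) := by
  rcases le_total s t with hst | hts
  · rw [hw.eq_add_integral s hs t ht hst, add_sub_cancel_left]
  · rw [hw.eq_add_integral t ht s hs hts, intervalIntegral.integral_symm, sub_add_cancel_left]

variable [FiniteDimensional ℝ W]

theorem intervalIntegrable (hI : I.OrdConnected) (hw : IsIntegralSolution e a I w) {s t : ℝ}
    (hs : s ∈ I) (ht : t ∈ I) : IntervalIntegrable (fun τ => a (w τ)) volume s t :=
  intervalIntegrable_of_locallyIntegrableOn hI
    (a.toContinuousLinearMap.locallyIntegrableOn_comp hw.locallyIntegrableOn) hs ht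

theorem continuousOn_uIcc (hI : I.OrdConnected) (hw : IsIntegralSolution e a I w) {s t : ℝ}
    (hs : s ∈ I) (ht : t ∈ I) : ContinuousOn (fun τ => e (w τ)) (uIcc s t) := by
  have hprimitive : ContinuousOn (fun τ => e (w s) + ∫ σ in s..τ, a (w σ)) (uIcc s t) :=
    continuousOn_const.add (intervalIntegral.continuousOn_primitive_interval'
      (hw.intervalIntegrable hI hs ht) left_mem_uIcc)
  refine hprimitive.congr fun τ hτ => ?_
  simp only [hw.integral_eq_sub hs (hI.uIcc_subset hs ht hτ), add_sub_cancel]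

variable [FiniteDimensional ℝ V]

theorem ae_velocity_mem_span (hI : I.OrdConnected) (hw : IsIntegralSolution e a I w) :
    ∀ᵐ t ∂(volume.restrict I), a (w t) ∈ Submodule.span ℝ ((fun t => e (w t)) '' I) := by
  have := FiniteDimensional.complete ℝ V
  refine ae_mem_of_intervalIntegral_mem (Submodule.closed_of_finiteDimensional _) hI
    (fun s hs t ht => hw.intervalIntegrable hI hs ht) fun s hs t ht => ?_
  rw [hw.integral_eq_sub hs ht]
  exact Submodule.sub_mem _ (Submodule.subset_span ⟨t, ht, rfl⟩)
    (Submodule.subset_span ⟨s, hs, rfl⟩)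

theorem isConsistentSubspace_span (hI : I.OrdConnected) (hIn : I.Nontrivial)
    (hw : IsIntegralSolution e a I w) :
    IsConsistentSubspace e a (Submodule.span ℝ ((fun t => e (w t)) '' I)) := by
  refine Submodule.span_le.2 ?_
  rintro _ ⟨t, ht, rfl⟩
  obtain ⟨s, hs, hst⟩ := hIn.exists_ne t
  refine mem_of_ae_restrict_mem_of_continuousOn (μ := volume) (s := uIcc s t)
    (hw.continuousOn_uIcc hI hs ht) (closure_interior_Icc (inf_lt_sup.2 hst).ne).symm.subset
    (Submodule.closed_of_finiteDimensional _) ?_ right_mem_uIcc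
  filter_upwards [ae_restrict_of_ae_restrict_of_subset (hI.uIcc_subset hs ht)
    (hw.ae_velocity_mem_span hI)] with τ hτ
  exact ⟨w τ, hτ, rfl⟩

theorem ae_mem_admissibleSubspace (hI : I.OrdConnected) (hw : IsIntegralSolution e a I w) :
    ∀ᵐ t ∂(volume.restrict I), w t ∈ admissibleSubspace e a := by
  rcases I.subsingleton_or_nontrivial with hIs | hIn
  · simp [Measure.restrict_zero_set (hIs.measure_zero volume)]
  · have hle := (hw.isConsistentSubspace_span hI hIn).le_maxConsistentSubspace
    filter_upwards [hw.ae_velocity_mem_span hI, ae_restrict_mem hI.measurableSet] with t hat ht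
    exact ⟨hle (Submodule.subset_span ⟨t, ht, rfl⟩), hle hat⟩

theorem map {V' W' : Type*} [NormedAddCommGroup V'] [NormedSpace ℝ V'] [CompleteSpace V']
    [NormedAddCommGroup W'] [NormedSpace ℝ W'] (hI : I.OrdConnected)
    (hw : IsIntegralSolution e a I w) {e' a' : W' →ₗ[ℝ] V'} {T : W →ₗ[ℝ] W'} {L : V →ₗ[ℝ] V'}
    (he : ∀ v, e' (T v) = L (e v))
    (ha : ∀ᵐ t ∂(volume.restrict I), a' (T (w t)) = L (a (w t))) :
    IsIntegralSolution e' a' I fun t => T (w t) := by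
  have := FiniteDimensional.complete ℝ V
  refine ⟨T.toContinuousLinearMap.locallyIntegrableOn_comp hw.locallyIntegrableOn,
    fun t₀ ht₀ t ht hle => ?_⟩
  have hintegral : ∫ s in t₀..t, a' (T (w s)) = L (∫ s in t₀..t, a (w s)) :=
    calc ∫ s in t₀..t, a' (T (w s)) = ∫ s in t₀..t, L (a (w s)) := by
          refine intervalIntegral.integral_congr_ae ?_
          filter_upwards [(ae_restrict_iff' hI.measurableSet).1 ha] with s hs hst
          exact hs (hI.uIcc_subset ht₀ ht (uIoc_subset_uIcc hst))
      _ = L (∫ s in t₀..t, a (w s)) :=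
          L.toContinuousLinearMap.intervalIntegral_comp_comm (hw.intervalIntegrable hI ht₀ ht)
  rw [hintegral, he, he, hw.eq_add_integral t₀ ht₀ t ht hle, map_add]

end IsIntegralSolution

namespace AdmissibleCoordinates

variable {P U : Type*} [NormedAddCommGroup P] [NormedSpace ℝ P] [FiniteDimensional ℝ P]
  [NormedAddCommGroup U] [NormedSpace ℝ U] {e a : W →ₗ[ℝ] V} {I : Set ℝ}
  (R : AdmissibleCoordinates e a P U)

theorem exists_ode_solution [FiniteDimensional ℝ V] [FiniteDimensional ℝ W]
    (hI : I.OrdConnected) {w : ℝ → W} (hw : IsIntegralSolution e a I w) :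
    ∃ q : ℝ → P × U, IsIntegralSolution (LinearMap.fst ℝ P U) R.dynamics I q ∧
      ∀ᵐ t ∂(volume.restrict I), w t = R.output (q t) := by
  have := FiniteDimensional.complete ℝ P
  obtain ⟨L, T, hL, hT, hLT⟩ := R.exists_leftInverse
  have hrange : ∀ᵐ t ∂(volume.restrict I), w t ∈ LinearMap.range R.output :=
    R.range_output ▸ hw.ae_mem_admissibleSubspace hI
  refine ⟨fun t => T (w t), hw.map hI hLT ?_, ?_⟩
  · filter_upwards [hrange] with t ⟨q, hq⟩
    rw [← hq, hT q, R.comp_output_eq_velocity, hL]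
  · filter_upwards [hrange] with t ⟨q, hq⟩
    rw [← hq, hT q]

theorem isIntegralSolution_output [CompleteSpace V] [FiniteDimensional ℝ U]
    (hI : I.OrdConnected) {q : ℝ → P × U}
    (hq : IsIntegralSolution (LinearMap.fst ℝ P U) R.dynamics I q) :
    IsIntegralSolution e a I fun t => R.output (q t) :=
  hq.map hI R.comp_output_eq_state (.of_forall fun t => R.comp_output_eq_velocity (q t))

end AdmissibleCoordinates

end IntegralSolution

section Matrices

variable {c n m r k : ℕ}

theorem isDAESolution_iff {E A : Matrix (Fin c) (Fin n) ℝ} {B : Matrix (Fin c) (Fin m) ℝ}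
    {I : Set ℝ} {x : ℝ → Fin n → ℝ} {u : ℝ → Fin m → ℝ} :
    IsDAESolution E A B I x u ↔
      IsIntegralSolution (E.mulVecLin ∘ₗ LinearMap.fst ℝ _ _) (A.mulVecLin.coprod B.mulVecLin) I
        fun t => (x t, u t) := by
  simp [IsDAESolution, isIntegralSolution_iff, locallyIntegrableOn_prodMk_iff, and_assoc]

theorem isStateTraj_iff {F : (Fin r → ℝ) × (Fin k → ℝ) →ₗ[ℝ] (Fin r → ℝ)}
    {I : Set ℝ} {p : ℝ → Fin r → ℝ} {g : ℝ → Fin k → ℝ} :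
    IsStateTraj (LinearMap.toMatrix' (F ∘ₗ LinearMap.inl ℝ _ _))
        (LinearMap.toMatrix' (F ∘ₗ LinearMap.inr ℝ _ _)) I p g ↔
      IsIntegralSolution (LinearMap.fst ℝ _ _) F I fun t => (p t, g t) := by
  simp [IsStateTraj, isIntegralSolution_iff, locallyIntegrableOn_prodMk_iff, and_assoc, ← map_add]

theorem rank_toMatrix'_of_injective {K α β : Type*} [Field K] [Fintype β] [DecidableEq β]
    {f : (β → K) →ₗ[K] (α → K)} (hf : Function.Injective f) :
    (LinearMap.toMatrix' f).rank = Fintype.card β := by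
  rw [Matrix.rank, ← Matrix.toLin'_apply', Matrix.toLin'_toMatrix',
    LinearMap.finrank_range_of_inj hf, Module.finrank_fintype_fun_eq_card]

/-- The matrix, with rows split as in `Cl` and `Dl`, of a linear map with values `(x, u)`. -/
noncomputable def stackedMatrix (f : (Fin k → ℝ) →ₗ[ℝ] (Fin n → ℝ) × (Fin m → ℝ)) :
    Matrix (Fin n ⊕ Fin m) (Fin k) ℝ :=
  LinearMap.toMatrix' ((LinearEquiv.sumArrowLequivProdArrow _ _ ℝ ℝ).symm.toLinearMap ∘ₗ f)

theorem stackedMatrix_mulVec (f : (Fin k → ℝ) →ₗ[ℝ] (Fin n → ℝ) × (Fin m → ℝ)) (v : Fin k → ℝ) :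
    stackedMatrix f *ᵥ v = Sum.elim (f v).1 (f v).2 := by
  simp only [stackedMatrix, LinearMap.toMatrix'_mulVec]
  rfl

theorem mul_firstRows_stackedMatrix (E : Matrix (Fin c) (Fin n) ℝ)
    (f : (Fin k → ℝ) →ₗ[ℝ] (Fin n → ℝ) × (Fin m → ℝ)) :
    E * firstRows (stackedMatrix f) =
      LinearMap.toMatrix' ((E.mulVecLin ∘ₗ LinearMap.fst ℝ _ _) ∘ₗ f) := by
  rw [LinearMap.comp_assoc, LinearMap.toMatrix'_comp, ← Matrix.toLin'_apply',
    LinearMap.toMatrix'_toLin']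
  rfl

end Matrices

section Realization

variable {c n m r k : ℕ} {E A : Matrix (Fin c) (Fin n) ℝ} {B : Matrix (Fin c) (Fin m) ℝ}

namespace AdmissibleCoordinates

variable (R : AdmissibleCoordinates (E.mulVecLin ∘ₗ LinearMap.fst ℝ (Fin n → ℝ) (Fin m → ℝ))
    (A.mulVecLin.coprod B.mulVecLin) (Fin r → ℝ) (Fin k → ℝ))

theorem realizesOn {I : Set ℝ} (hI : I.OrdConnected) :
    RealizesOn E A B
      (LinearMap.toMatrix' (R.dynamics ∘ₗ LinearMap.inl ℝ _ _))
      (LinearMap.toMatrix' (R.dynamics ∘ₗ LinearMap.inr ℝ _ _))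
      (stackedMatrix (R.output ∘ₗ LinearMap.inl ℝ _ _))
      (stackedMatrix (R.output ∘ₗ LinearMap.inr ℝ _ _)) I := by
  have houtput (p : Fin r → ℝ) (g : Fin k → ℝ) :
      stackedMatrix (R.output ∘ₗ LinearMap.inl ℝ _ _) *ᵥ p +
        stackedMatrix (R.output ∘ₗ LinearMap.inr ℝ _ _) *ᵥ g =
      Sum.elim (R.output (p, g)).1 (R.output (p, g)).2 := by
    have hsplit : R.output (p, g) = R.output (p, 0) + R.output (0, g) := by simp [← map_add]
    simp [stackedMatrix_mulVec, hsplit, Sum.elim_add_add]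
  refine ⟨fun x u hxu => ?_, fun p g hpg => ?_⟩
  · obtain ⟨q, hq, hxuq⟩ := R.exists_ode_solution hI (isDAESolution_iff.1 hxu)
    refine ⟨fun t => (q t).1, fun t => (q t).2, isStateTraj_iff.2 hq, ?_⟩
    filter_upwards [hxuq] with t ht
    rw [houtput, ← ht]
  · exact ⟨_, _, isDAESolution_iff.2 (R.isIntegralSolution_output hI (isStateTraj_iff.1 hpg)),
      .of_forall fun t => (houtput (p t) (g t)).symm⟩

theorem mul_firstRows_output_inl :
    E * firstRows (stackedMatrix (R.output ∘ₗ LinearMap.inl ℝ _ _)) =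
      LinearMap.toMatrix' R.stateMap := by
  rw [mul_firstRows_stackedMatrix]
  exact congrArg _ (LinearMap.ext fun p => R.comp_output_eq_state (p, 0))

theorem mul_firstRows_output_inr :
    E * firstRows (stackedMatrix (R.output ∘ₗ LinearMap.inr ℝ _ _)) = 0 := by
  rw [mul_firstRows_stackedMatrix, ← map_zero LinearMap.toMatrix']
  exact congrArg _ (LinearMap.ext fun g =>
    (R.comp_output_eq_state (0, g)).trans (map_zero R.stateMap))

theorem rank_mul_firstRows_output_inl :
    (E * firstRows (stackedMatrix (R.output ∘ₗ LinearMap.inl ℝ _ _))).rank = r := by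
  rw [R.mul_firstRows_output_inl, rank_toMatrix'_of_injective R.stateMap_injective,
    Fintype.card_fin]

theorem rank_output_inr :
    (stackedMatrix (R.output ∘ₗ LinearMap.inr ℝ _ _)).rank = k := by
  refine (rank_toMatrix'_of_injective ?_).trans (Fintype.card_fin k)
  exact (LinearEquiv.sumArrowLequivProdArrow (Fin n) (Fin m) ℝ ℝ).symm.injective.comp
    (R.output_injective.comp LinearMap.inr_injective)

end AdmissibleCoordinates

theorem IsNiceInterval.ordConnected {I : Set ℝ} (hI : IsNiceInterval I) : I.OrdConnected := by
  rcases hI with ⟨a, b, rfl⟩ | ⟨a, rfl⟩ | ⟨a, rfl⟩ | rfl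
  exacts [ordConnected_Icc, ordConnected_Ici, ordConnected_Iic, ordConnected_univ]

end Realization

theorem exists_associated_ode_lti_general {c n m : ℕ}
    (E A : Matrix (Fin c) (Fin n) ℝ) (B : Matrix (Fin c) (Fin m) ℝ) :
    ∃ (nh k : ℕ) (Al : Matrix (Fin nh) (Fin nh) ℝ) (Bl : Matrix (Fin nh) (Fin k) ℝ)
      (Cl : Matrix (Fin n ⊕ Fin m) (Fin nh) ℝ) (Dl : Matrix (Fin n ⊕ Fin m) (Fin k) ℝ),
      IsAssociated E A B Al Bl Cl Dl ∧ nh ≤ E.rank ∧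
        ∀ I : Set ℝ, I.OrdConnected → RealizesOn E A B Al Bl Cl Dl I := by
  obtain ⟨r, k, ⟨R⟩⟩ := AdmissibleCoordinates.exists_finite
    (e := E.mulVecLin ∘ₗ LinearMap.fst ℝ (Fin n → ℝ) (Fin m → ℝ))
    (a := A.mulVecLin.coprod B.mulVecLin)
  have hrank : r ≤ E.rank :=
    R.rank_mul_firstRows_output_inl.ge.trans (Matrix.rank_mul_le_left _ _)
  exact ⟨r, k, _, _, _, _,
    ⟨hrank.trans E.rank_le_width, .inr R.rank_output_inr, R.mul_firstRows_output_inr,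
      R.rank_mul_firstRows_output_inl, fun I hI => R.realizesOn hI.ordConnected⟩,
    hrank, fun I hI => R.realizesOn hI⟩

/-- Theorem (Existence): every DAE-LTI admits an associated ODE-LTI, whose state
dimension is at most `rank E`. -/
theorem exists_associated_ode_lti {c n m : ℕ}
    (E A : Matrix (Fin c) (Fin n) ℝ) (B : Matrix (Fin c) (Fin m) ℝ) :
    ∃ (nh k : ℕ) (Al : Matrix (Fin nh) (Fin nh) ℝ) (Bl : Matrix (Fin nh) (Fin k) ℝ)
      (Cl : Matrix (Fin n ⊕ Fin m) (Fin nh) ℝ) (Dl : Matrix (Fin n ⊕ Fin m) (Fin k) ℝ),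
      IsAssociated E A B Al Bl Cl Dl ∧ nh ≤ E.rank := by
  obtain ⟨nh, k, Al, Bl, Cl, Dl, hassoc, hrank, -⟩ := exists_associated_ode_lti_general E A B
  exact ⟨nh, k, Al, Bl, Cl, Dl, hassoc, hrank⟩
end

section
/- If (A,B,C,D) is a minimal ODE-LTI realization of the behavior B_ℝ(E,A,B) such that the stacked matrix [B; D] is either of full column rank or zero with a single column, then (A,B,C,D) is an ODE-LTI associated with the DAE d(Ex)/dt = Ax + Bu. -/
open MeasureTheory Set Filter Matrix

/-!
Let `V` be the greatest subspace with `A V ⊆ E V`, where `y = (x, u)` and the DAE reads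
`d(E y)/dt = A y`. Every solution stays in `V` almost everywhere, and a continuous solution passes
through each point of `V`; a realization therefore has at least `dim E V` states, and inverting `E`
on `V` gives one with exactly that many.

For a minimal realization this count makes `E C` injective. Step inputs force `E D = 0`, since `E y`
is continuous, and then differentiating `E y = E C p` gives `E C A = A C` and `E C B = A D`. These
identities do not mention an interval. As `E C` is injective, they let state and input be recovered
linearly from `y ∈ V`, so the realization works on every interval, and they give `ker D ⊆ ker B`,
so that full column rank of `[B; D]` passes to `D`.
-/

namespace LTIRealization

section Analysis

open Topology

variable {V W : Type*} [NormedAddCommGroup V] [NormedSpace ℝ V]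
  [NormedAddCommGroup W] [NormedSpace ℝ W] {I : Set ℝ} {φ h h' : ℝ → V}

/-- `φ` is a primitive on `I` of the locally integrable function `h`, that is, a Carathéodory
solution of `φ' = h`. Local integrability of `h` is part of the definition, so that on an interval
`I` the integrals never take their junk value. -/
structure IsPrimitiveOn (φ h : ℝ → V) (I : Set ℝ) : Prop where
  locallyIntegrableOn : LocallyIntegrableOn h I
  integral_eq_sub : ∀ t₀ ∈ I, ∀ t ∈ I, ∫ s in t₀..t, h s = φ t - φ t₀

lemma isPrimitiveOn_iff_forall_le :
    IsPrimitiveOn φ h I ↔ LocallyIntegrableOn h I ∧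
      ∀ t₀ ∈ I, ∀ t ∈ I, t₀ ≤ t → φ t = φ t₀ + ∫ s in t₀..t, h s := by
  refine ⟨fun hφ => ⟨hφ.locallyIntegrableOn, fun t₀ ht₀ t ht _ => ?_⟩,
    fun ⟨hint, hφ⟩ => ⟨hint, fun t₀ ht₀ t ht => ?_⟩⟩
  · rw [hφ.integral_eq_sub t₀ ht₀ t ht, add_sub_cancel]
  · rcases le_total t₀ t with hle | hle
    · exact eq_sub_of_add_eq' (hφ t₀ ht₀ t ht hle).symm
    · rw [intervalIntegral.integral_symm, hφ t ht t₀ ht₀ hle, sub_add_cancel_left]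

lemma ae_mem_interior (hI : I.OrdConnected) : ∀ᵐ t ∂volume.restrict I, t ∈ interior I := by
  have hfrontier : ∀ᵐ t : ℝ, t ∉ frontier I := by
    simpa [ae_iff] using (hI.convex (𝕜 := ℝ)).addHaar_frontier volume
  rw [ae_restrict_iff' hI.measurableSet]
  filter_upwards [hfrontier] with t ht htI
  exact (mem_interior_iff_notMem_frontier htI).2 ht

lemma subset_closure_interior (hI : I.OrdConnected) (hnontriv : I.Nontrivial) :
    I ⊆ closure (interior I) := by
  have hconvex : Convex ℝ I := hI.convex
  rw [hconvex.closure_interior_eq_closure_of_nonempty_interior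
    (hconvex.nontrivial_iff_nonempty_interior.1 hnontriv)]
  exact subset_closure

lemma forall_mem_of_ae_mem {X : Type*} [PseudoEMetricSpace X] {f : ℝ → X} {S : Set X}
    (hI : I ⊆ closure (interior I)) (hS : IsClosed S) (hf : ContinuousOn f I)
    (hmem : ∀ᵐ t ∂volume.restrict I, f t ∈ S) : ∀ t ∈ I, f t ∈ S := by
  have hdist : EqOn (fun t => Metric.infEDist (f t) S) 0 I :=
    Measure.eqOn_of_ae_eq (hmem.mono fun t ht => Metric.infEDist_zero_of_mem ht)
      (Metric.continuous_infEDist.comp_continuousOn hf) continuousOn_const hI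
  exact fun t ht => (Metric.mem_iff_infEDist_zero_of_closed hS).2 (hdist ht)

lemma eq_zero_of_ae_eq_indicator_Ici {X : Type*} [EMetricSpace X] [Zero X] {f : ℝ → X} {a : ℝ}
    {w : X} (hf : Continuous f) (hae : f =ᵐ[volume] (Ici a).indicator fun _ => w) : w = 0 := by
  have hright : f a = w := by
    refine forall_mem_of_ae_mem (I := Ici a) (S := {w}) (by simp) isClosed_singleton
      hf.continuousOn ?_ a self_mem_Ici
    filter_upwards [ae_restrict_of_ae hae, ae_restrict_mem measurableSet_Ici] with t ht hta
    exact ht.trans (indicator_of_mem hta _)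
  have hleft : f a = 0 := by
    refine forall_mem_of_ae_mem (I := Iic a) (S := {0}) (by simp) isClosed_singleton
      hf.continuousOn ?_ a self_mem_Iic
    rw [← restrict_Iio_eq_restrict_Iic]
    filter_upwards [ae_restrict_of_ae hae, ae_restrict_mem measurableSet_Iio] with t ht hta
    exact ht.trans (indicator_of_notMem (notMem_Ici.2 hta) _)
  exact hright.symm.trans hleft

namespace IsPrimitiveOn

lemma intervalIntegrable (hφ : IsPrimitiveOn φ h I) (hI : I.OrdConnected) {a b : ℝ}
    (ha : a ∈ I) (hb : b ∈ I) : IntervalIntegrable h volume a b :=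
  (hφ.locallyIntegrableOn.integrableOn_compact_subset
    (hI.uIcc_subset ha hb) isCompact_uIcc).intervalIntegrable

lemma congr_ae (hφ : IsPrimitiveOn φ h I) (hI : I.OrdConnected)
    (hae : h =ᵐ[volume.restrict I] h') : IsPrimitiveOn φ h' I := by
  refine ⟨hφ.locallyIntegrableOn.congr hae, fun t₀ ht₀ t ht => ?_⟩
  rw [← hφ.integral_eq_sub t₀ ht₀ t ht]
  refine intervalIntegral.integral_congr_ae ?_
  filter_upwards [(ae_restrict_iff' hI.measurableSet).1 hae] with s hs hst
  exact (hs (hI.uIcc_subset ht₀ ht (uIoc_subset_uIcc hst))).symm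

lemma clm_comp [CompleteSpace V] [CompleteSpace W] (hφ : IsPrimitiveOn φ h I)
    (hI : I.OrdConnected) (L : V →L[ℝ] W) :
    IsPrimitiveOn (fun t => L (φ t)) (fun t => L (h t)) I := by
  refine ⟨L.locallyIntegrableOn_comp hφ.locallyIntegrableOn, fun t₀ ht₀ t ht => ?_⟩
  rw [L.intervalIntegral_comp_comm (hφ.intervalIntegrable hI ht₀ ht),
    hφ.integral_eq_sub t₀ ht₀ t ht, map_sub]

lemma continuousOn (hφ : IsPrimitiveOn φ h I) (hI : I.OrdConnected) : ContinuousOn φ I := by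
  intro t ht
  obtain ⟨s, hs, hint⟩ := hφ.locallyIntegrableOn t ht
  obtain ⟨ε, hε, hball⟩ := Metric.mem_nhdsWithin_iff.1 hs
  let K := Metric.ball t ε ∩ I
  have hK : K.OrdConnected := (convex_ball t ε).ordConnected.inter hI
  have htK : t ∈ K := ⟨Metric.mem_ball_self hε, ht⟩
  have hKint : Integrable (K.indicator h) :=
    (hint.mono_set hball).integrable_indicator hK.measurableSet
  have hcont : Continuous fun x => φ t + ∫ s in t..x, K.indicator h s :=
    continuous_const.add (intervalIntegral.continuous_primitive
      (fun _ _ => hKint.intervalIntegrable) t)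
  have hEqOn : EqOn φ (fun x => φ t + ∫ s in t..x, K.indicator h s) K := by
    intro x hx
    have hcongr : ∫ s in t..x, K.indicator h s = ∫ s in t..x, h s :=
      intervalIntegral.integral_congr fun s hs =>
        indicator_of_mem (hK.uIcc_subset htK hx hs) h
    simp only [hcongr, hφ.integral_eq_sub t ht x hx.2, add_sub_cancel]
  exact (hcont.continuousWithinAt.congr hEqOn (hEqOn htK)).mono_of_mem_nhdsWithin
    (inter_mem (mem_nhdsWithin_of_mem_nhds (Metric.ball_mem_nhds t hε)) self_mem_nhdsWithin)

lemma ae_hasDerivAt [CompleteSpace V] (hφ : IsPrimitiveOn φ h I) (hI : I.OrdConnected) :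
    ∀ᵐ t ∂volume.restrict I, HasDerivAt φ (h t) t := by
  have hrat : ∀ᵐ t : ℝ, ∀ a b : ℚ, (a : ℝ) ∈ I → (b : ℝ) ∈ I → t ∈ uIcc (a : ℝ) b →
      ∀ c ∈ uIcc (a : ℝ) b, HasDerivAt (fun x => ∫ s in c..x, h s) (h t) t := by
    simp only [ae_all_iff]
    exact fun a b ha hb => (hφ.intervalIntegrable hI ha hb).ae_hasDerivAt_integral
  filter_upwards [ae_restrict_of_ae hrat, ae_mem_interior hI] with t hderiv ht
  have hIt : I ∈ 𝓝 t := mem_interior_iff_mem_nhds.1 ht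
  obtain ⟨l, u, ⟨hlt, htu⟩, hlu⟩ := mem_nhds_iff_exists_Ioo_subset.1 hIt
  obtain ⟨a, hla, hat⟩ := exists_rat_btwn hlt
  obtain ⟨b, htb, hbu⟩ := exists_rat_btwn htu
  have haI : (a : ℝ) ∈ I := hlu ⟨hla, hat.trans htu⟩
  have hbI : (b : ℝ) ∈ I := hlu ⟨hlt.trans htb, hbu⟩
  have htab : t ∈ uIcc (a : ℝ) b := Icc_subset_uIcc ⟨hat.le, htb.le⟩
  refine ((hderiv a b haI hbI htab t htab).const_add (φ t)).congr_of_eventuallyEq ?_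
  filter_upwards [hIt] with x hx
  rw [hφ.integral_eq_sub t (interior_subset ht) x hx, add_sub_cancel]

lemma ae_eq [CompleteSpace V] (hφ : IsPrimitiveOn φ h I) (hφ' : IsPrimitiveOn φ h' I)
    (hI : I.OrdConnected) : h =ᵐ[volume.restrict I] h' := by
  filter_upwards [hφ.ae_hasDerivAt hI, hφ'.ae_hasDerivAt hI] with t hderiv hderiv'
  exact hderiv.unique hderiv'

lemma ae_mem [CompleteSpace V] (hφ : IsPrimitiveOn φ h I) (hI : I.OrdConnected)
    {S : Submodule ℝ V} (hS : IsClosed (S : Set V)) (hmem : ∀ t ∈ I, φ t ∈ S) :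
    ∀ᵐ t ∂volume.restrict I, h t ∈ S := by
  have hclosure : closure (Submodule.span ℝ (φ '' I) : Set V) ⊆ S :=
    closure_minimal (Submodule.span_le.2 (image_subset_iff.2 hmem)) hS
  filter_upwards [hφ.ae_hasDerivAt hI, ae_mem_interior hI] with t hderiv ht
  rw [← hderiv.hasDerivWithinAt.derivWithin
    (uniqueDiffWithinAt_of_mem_nhds (mem_interior_iff_mem_nhds.1 ht))]
  exact hclosure (range_derivWithin_subset_closure_span_image φ
    (by simpa using subset_closure) (mem_range_self t))

lemma of_hasDerivAt [CompleteSpace V] (hh : Continuous h) (hφ : ∀ t, HasDerivAt φ (h t) t) :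
    IsPrimitiveOn φ h univ :=
  ⟨hh.locallyIntegrable.locallyIntegrableOn univ, fun _ _ _ _ =>
    intervalIntegral.integral_eq_sub_of_hasDerivAt (fun s _ => hφ s) (hh.intervalIntegrable _ _)⟩

lemma indicator_Ici (hφ : IsPrimitiveOn φ h univ) {a : ℝ} (ha : φ a = 0) :
    IsPrimitiveOn ((Ici a).indicator φ) ((Ici a).indicator h) univ := by
  have hint : LocallyIntegrable ((Ici a).indicator h) :=
    (locallyIntegrableOn_univ.1 hφ.locallyIntegrableOn).indicator measurableSet_Ici
  have hint' (t₀ t : ℝ) : IntervalIntegrable ((Ici a).indicator h) volume t₀ t :=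
    (hint.integrableOn_isCompact isCompact_uIcc).intervalIntegrable
  have hbase (t : ℝ) : ∫ s in a..t, (Ici a).indicator h s = (Ici a).indicator φ t := by
    rcases le_or_gt a t with hat | hta
    · rw [indicator_of_mem (mem_Ici.2 hat), ← sub_zero (φ t), ← ha,
        ← hφ.integral_eq_sub a trivial t trivial]
      refine intervalIntegral.integral_congr fun s hs => indicator_of_mem ?_ h
      rw [uIcc_of_le hat] at hs
      exact hs.1
    · rw [indicator_of_notMem (notMem_Ici.2 hta), intervalIntegral.integral_symm,
        intervalIntegral.integral_of_le hta.le, ← integral_Ico_eq_integral_Ioc,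
        setIntegral_eq_zero_of_forall_eq_zero, neg_zero]
      exact fun s hs => indicator_of_notMem (notMem_Ici.2 hs.2) h
  refine ⟨hint.locallyIntegrableOn univ, fun t₀ _ t _ => ?_⟩
  rw [← hbase, ← hbase, intervalIntegral.integral_interval_sub_left (hint' _ _) (hint' _ _)]

end IsPrimitiveOn

lemma exists_hasDerivAt_linear [CompleteSpace V] (G : V →L[ℝ] V) {b : ℝ → V} (hb : Continuous b)
    (p₀ : V) : ∃ p : ℝ → V, p 0 = p₀ ∧ ∀ t, HasDerivAt p (G (p t) + b t) t := by
  -- Variation of constants.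
  let Φ : ℝ → V →L[ℝ] V := fun t => NormedSpace.exp (t • G)
  have hΦ (t : ℝ) : HasDerivAt Φ (G * Φ t) t := hasDerivAt_exp_smul_const' G t
  have hΦ_cont : Continuous Φ := continuous_iff_continuousAt.2 fun t => (hΦ t).continuousAt
  have hΦ_neg (t : ℝ) (v : V) : Φ t (Φ (-t) v) = v := by
    have hmul : Φ t * Φ (-t) = 1 := by
      let := NormedAlgebra.restrictScalars ℚ ℝ (V →L[ℝ] V)
      rw [← NormedSpace.exp_add_of_commute ((Commute.refl G).smul_left t |>.smul_right (-t)),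
        ← add_smul, add_neg_cancel, zero_smul, NormedSpace.exp_zero]
    exact congr($hmul v)
  have hforce : Continuous fun s => Φ (-s) (b s) := (hΦ_cont.comp continuous_neg).clm_apply hb
  let c : ℝ → V := fun t => p₀ + ∫ s in (0 : ℝ)..t, Φ (-s) (b s)
  have hc (t : ℝ) : HasDerivAt c (Φ (-t) (b t)) t :=
    (hforce.integral_hasStrictDerivAt 0 t).hasDerivAt.const_add p₀
  refine ⟨fun t => Φ t (c t), by simp [Φ, c], fun t => ?_⟩
  simpa [hΦ_neg] using (hΦ t).clm_apply (hc t)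

end Analysis

/-- The linear homogeneous DAE `d(E y)/dt = A y`; in the DAE `d(E x)/dt = A x + B u` the variable is
`y = (x, u)`. -/
structure DAE (Y Z : Type*) [AddCommGroup Y] [Module ℝ Y] [AddCommGroup Z] [Module ℝ Z] where
  E : Y →ₗ[ℝ] Z
  A : Y →ₗ[ℝ] Z

/-- The ODE-LTI `p' = A p + B g`, `y = C p + D g` with state space `P`, input space `U` and output
space `Y`. -/
structure LTISystem (P U Y : Type*) [AddCommGroup P] [Module ℝ P] [AddCommGroup U] [Module ℝ U]
    [AddCommGroup Y] [Module ℝ Y] where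
  A : P →ₗ[ℝ] P
  B : U →ₗ[ℝ] P
  C : P →ₗ[ℝ] Y
  D : U →ₗ[ℝ] Y

section Algebra

variable {Y Z P Q U W : Type*} [AddCommGroup Y] [Module ℝ Y] [AddCommGroup Z] [Module ℝ Z]
  [AddCommGroup P] [Module ℝ P] [AddCommGroup Q] [Module ℝ Q] [AddCommGroup U] [Module ℝ U]
  [AddCommGroup W] [Module ℝ W]
  {Δ : DAE Y Z} {S : LTISystem P U Y}

lemma exists_comp_comp_eq_self {K M N : Type*} [DivisionRing K] [AddCommGroup M] [Module K M]
    [AddCommGroup N] [Module K N] (L : M →ₗ[K] N) : ∃ R : N →ₗ[K] M, L ∘ₗ R ∘ₗ L = L := by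
  obtain ⟨ρ, hρ⟩ := L.rangeRestrict.exists_rightInverse_of_surjective L.range_rangeRestrict
  obtain ⟨R, hR⟩ := LinearMap.exists_extend ρ
  refine ⟨R, LinearMap.ext fun x => ?_⟩
  have hRL : R (L x) = ρ (L.rangeRestrict x) := congr($hR (L.rangeRestrict x))
  rw [LinearMap.comp_apply, LinearMap.comp_apply, hRL]
  exact congr(($hρ (L.rangeRestrict x) : N))

namespace DAE

/-- The map `T ↦ A⁻¹ (E T)` on subspaces iterated by the Wong sequence. -/
def wongStep (Δ : DAE Y Z) : Submodule ℝ Y →o Submodule ℝ Y where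
  toFun T := (T.map Δ.E).comap Δ.A
  monotone' _ _ hT := Submodule.comap_mono (Submodule.map_mono hT)

/-- The limit of the Wong sequence, introduced as the greatest subspace `T` with `A T ⊆ E T`. -/
def wongLimit (Δ : DAE Y Z) : Submodule ℝ Y :=
  Δ.wongStep.gfp

lemma le_wongLimit {T : Submodule ℝ Y} (hT : T.map Δ.A ≤ T.map Δ.E) : T ≤ Δ.wongLimit :=
  Δ.wongStep.le_gfp (Submodule.map_le_iff_le_comap.1 hT)

lemma map_A_wongLimit_le (Δ : DAE Y Z) : Δ.wongLimit.map Δ.A ≤ Δ.wongLimit.map Δ.E :=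
  Submodule.map_le_iff_le_comap.2 Δ.wongStep.map_gfp.ge

end DAE

namespace LTISystem

/-- The purely algebraic, interval-free counterpart of `S` realizing the behavior of `Δ`. -/
structure Represents (S : LTISystem P U Y) (Δ : DAE Y Z) : Prop where
  E_D : Δ.E ∘ₗ S.D = 0
  E_C_A : Δ.E ∘ₗ S.C ∘ₗ S.A = Δ.A ∘ₗ S.C
  E_C_B : Δ.E ∘ₗ S.C ∘ₗ S.B = Δ.A ∘ₗ S.D
  E_C_injective : Function.Injective (Δ.E ∘ₗ S.C)
  map_E_wongLimit_le : Δ.wongLimit.map Δ.E ≤ (Δ.E ∘ₗ S.C).range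
  wongLimit_inf_ker_le : Δ.wongLimit ⊓ Δ.E.ker ≤ S.D.range

namespace Represents

lemma B_eq_zero_of_D_eq_zero (hS : S.Represents Δ) {u : U} (hu : S.D u = 0) : S.B u = 0 := by
  apply hS.E_C_injective
  rw [map_zero]
  exact congr($hS.E_C_B u).trans (by simp [hu])

lemma range_C_le_wongLimit (hS : S.Represents Δ) : S.C.range ≤ Δ.wongLimit := by
  refine Δ.le_wongLimit ?_
  rw [← LinearMap.range_comp, ← hS.E_C_A, ← LinearMap.range_comp, ← LinearMap.comp_assoc]
  exact LinearMap.range_comp_le_range _ _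

lemma exists_decoder (hS : S.Represents Δ) :
    ∃ (N : Z →ₗ[ℝ] P) (M : Y →ₗ[ℝ] U), (∀ p, N (Δ.E (S.C p)) = p) ∧
      ∀ y ∈ Δ.wongLimit, S.C (N (Δ.E y)) + S.D (M y) = y := by
  obtain ⟨N, hN⟩ := (Δ.E ∘ₗ S.C).exists_leftInverse_of_injective
    (LinearMap.ker_eq_bot.2 hS.E_C_injective)
  obtain ⟨R, hR⟩ := exists_comp_comp_eq_self S.D
  have hR' (u : U) : S.D (R (S.D u)) = S.D u := congr($hR u)
  have hN' (p : P) : N (Δ.E (S.C p)) = p := congr($hN p)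
  refine ⟨N, R ∘ₗ (LinearMap.id - S.C ∘ₗ N ∘ₗ Δ.E), hN', fun y hy => ?_⟩
  have hres : y - S.C (N (Δ.E y)) ∈ Δ.wongLimit ⊓ Δ.E.ker := by
    refine ⟨sub_mem hy (hS.range_C_le_wongLimit ⟨_, rfl⟩), ?_⟩
    obtain ⟨p, hp⟩ := hS.map_E_wongLimit_le ⟨y, hy, rfl⟩
    have hp' : Δ.E (S.C p) = Δ.E y := hp
    rw [SetLike.mem_coe, LinearMap.mem_ker, map_sub, ← hp', hN', sub_self]
  obtain ⟨u, hu⟩ := hS.wongLimit_inf_ker_le hres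
  change S.C (N (Δ.E y)) + S.D (R (y - S.C (N (Δ.E y)))) = y
  rw [← hu, hR', hu, add_sub_cancel]

end Represents

/-- The system `S` in other state and input coordinates. -/
def conj (S : LTISystem P U Y) (e : P ≃ₗ[ℝ] Q) (f : U ≃ₗ[ℝ] W) : LTISystem Q W Y where
  A := e ∘ₗ S.A ∘ₗ e.symm
  B := e ∘ₗ S.B ∘ₗ f.symm
  C := S.C ∘ₗ e.symm
  D := S.D ∘ₗ f.symm

lemma Represents.conj (hS : S.Represents Δ) (e : P ≃ₗ[ℝ] Q) (f : U ≃ₗ[ℝ] W) :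
    (S.conj e f).Represents Δ where
  E_D := LinearMap.ext fun w => congr($hS.E_D (f.symm w))
  E_C_A := LinearMap.ext fun q => by simpa [LTISystem.conj] using congr($hS.E_C_A (e.symm q))
  E_C_B := LinearMap.ext fun w => by simpa [LTISystem.conj] using congr($hS.E_C_B (f.symm w))
  E_C_injective := hS.E_C_injective.comp e.symm.injective
  map_E_wongLimit_le := by
    simpa [LTISystem.conj, ← LinearMap.comp_assoc, LinearMap.range_comp]
      using hS.map_E_wongLimit_le
  wongLimit_inf_ker_le := by
    simpa [LTISystem.conj, LinearMap.range_comp] using hS.wongLimit_inf_ker_le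

end LTISystem

namespace DAE

lemma exists_represents (Δ : DAE Y Z) :
    ∃ S : LTISystem (Δ.wongLimit.map Δ.E) (Δ.E.submoduleMap Δ.wongLimit).ker Y,
      S.Represents Δ := by
  let eT := Δ.E.submoduleMap Δ.wongLimit
  let aT := Δ.A.restrict fun y hy => Δ.map_A_wongLimit_le (Submodule.mem_map_of_mem hy)
  obtain ⟨R, hR⟩ := eT.exists_rightInverse_of_surjective
    (LinearMap.range_eq_top.2 (Δ.E.submoduleMap_surjective _))
  have hER (z : Δ.wongLimit.map Δ.E) : Δ.E (R z) = z := congr(($hR z : Z))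
  refine ⟨⟨aT ∘ₗ R, aT ∘ₗ eT.ker.subtype, Δ.wongLimit.subtype ∘ₗ R,
    Δ.wongLimit.subtype ∘ₗ eT.ker.subtype⟩, ?_, ?_, ?_, ?_, ?_, ?_⟩
  · exact LinearMap.ext fun u => congr(($(LinearMap.mem_ker.1 u.2) : Z))
  · exact LinearMap.ext fun z => hER _
  · exact LinearMap.ext fun u => hER _
  · exact fun z z' hz => Subtype.ext ((hER z).symm.trans (hz.trans (hER z')))
  · exact fun z hz => ⟨⟨z, hz⟩, hER _⟩
  · exact fun y hy => ⟨⟨⟨y, hy.1⟩, Subtype.ext hy.2⟩, rfl⟩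

lemma exists_represents_fin [FiniteDimensional ℝ Y] (Δ : DAE Y Z) :
    ∃ (k : ℕ) (S : LTISystem (Fin (Module.finrank ℝ (Δ.wongLimit.map Δ.E)) → ℝ)
      (Fin k → ℝ) Y), S.Represents Δ := by
  obtain ⟨S, hS⟩ := Δ.exists_represents
  exact ⟨_, _, hS.conj (Module.finBasis ℝ _).equivFun (Module.finBasis ℝ _).equivFun⟩

end DAE

end Algebra

section Behavior

variable {Y Z P U : Type*} [NormedAddCommGroup Y] [NormedSpace ℝ Y]
  [NormedAddCommGroup Z] [NormedSpace ℝ Z] [NormedAddCommGroup P] [NormedSpace ℝ P]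
  [NormedAddCommGroup U] [NormedSpace ℝ U]
  {Δ : DAE Y Z} {S : LTISystem P U Y} {I : Set ℝ} {y : ℝ → Y} {p : ℝ → P} {g : ℝ → U}

/-- `y` belongs to the behavior of `Δ` on `I`; only `E y` has to be absolutely continuous. -/
structure DAE.IsSolution (Δ : DAE Y Z) (I : Set ℝ) (y : ℝ → Y) : Prop where
  locallyIntegrableOn : LocallyIntegrableOn y I
  isPrimitiveOn : IsPrimitiveOn (fun t => Δ.E (y t)) (fun t => Δ.A (y t)) I

namespace LTISystem

/-- `p` is a state trajectory of `S` on `I` for the input `g`. -/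
structure IsTrajectory (S : LTISystem P U Y) (I : Set ℝ) (p : ℝ → P) (g : ℝ → U) : Prop where
  locallyIntegrableOn_state : LocallyIntegrableOn p I
  locallyIntegrableOn_input : LocallyIntegrableOn g I
  isPrimitiveOn : IsPrimitiveOn p (fun t => S.A (p t) + S.B (g t)) I

/-- The output of `S` for the state trajectory `p` and the input `g`. -/
def output (S : LTISystem P U Y) (p : ℝ → P) (g : ℝ → U) (t : ℝ) : Y :=
  S.C (p t) + S.D (g t)

/-- On `I`, the behavior of `Δ` and the outputs of `S` agree up to null sets. -/
def Realizes (S : LTISystem P U Y) (Δ : DAE Y Z) (I : Set ℝ) : Prop :=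
  (∀ y, Δ.IsSolution I y → ∃ p g, S.IsTrajectory I p g ∧
    y =ᵐ[volume.restrict I] S.output p g) ∧
  (∀ p g, S.IsTrajectory I p g → ∃ y, Δ.IsSolution I y ∧
    y =ᵐ[volume.restrict I] S.output p g)

end LTISystem

-- In a smallest subspace `T` containing `y` almost everywhere, `E y` stays in `E T` by continuity,
-- hence so does its derivative `A y`; minimality then forces `A T ⊆ E T`.
lemma DAE.IsSolution.ae_mem_wongLimit [FiniteDimensional ℝ Y] [CompleteSpace Z]
    (hy : Δ.IsSolution I y) (hI : I.OrdConnected) :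
    ∀ᵐ t ∂volume.restrict I, y t ∈ Δ.wongLimit := by
  rcases I.subsingleton_or_nontrivial with hsub | hnontriv
  · simp [Measure.restrict_eq_zero.2 (hsub.measure_zero volume)]
  obtain ⟨T, (hT : ∀ᵐ t ∂volume.restrict I, y t ∈ T), hmin⟩ := wellFounded_lt.has_min
    {T : Submodule ℝ Y | ∀ᵐ t ∂volume.restrict I, y t ∈ T} ⟨⊤, by simp⟩
  have hclosed : IsClosed (T.map Δ.E : Set Z) := Submodule.closed_of_finiteDimensional _
  have hE : ∀ t ∈ I, Δ.E (y t) ∈ T.map Δ.E :=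
    forall_mem_of_ae_mem (subset_closure_interior hI hnontriv) hclosed
      (hy.isPrimitiveOn.continuousOn hI) (hT.mono fun _ => Submodule.mem_map_of_mem)
  have hA : ∀ᵐ t ∂volume.restrict I, y t ∈ (T.map Δ.E).comap Δ.A :=
    hy.isPrimitiveOn.ae_mem hI hclosed hE
  have hle : T ≤ (T.map Δ.E).comap Δ.A :=
    inf_eq_left.1 (eq_of_le_of_not_lt inf_le_left (hmin _ (hT.and hA)))
  exact hT.mono fun _ ht => Δ.le_wongLimit (Submodule.map_le_iff_le_comap.2 hle) ht

namespace LTISystem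

lemma IsTrajectory.locallyIntegrableOn_output [FiniteDimensional ℝ P] [FiniteDimensional ℝ U]
    (hp : S.IsTrajectory I p g) : LocallyIntegrableOn (S.output p g) I :=
  (S.C.toContinuousLinearMap.locallyIntegrableOn_comp hp.locallyIntegrableOn_state).add
    (S.D.toContinuousLinearMap.locallyIntegrableOn_comp hp.locallyIntegrableOn_input)

lemma IsTrajectory.isPrimitiveOn_comp [FiniteDimensional ℝ P] [CompleteSpace Z]
    (hp : S.IsTrajectory I p g) (hI : I.OrdConnected) (L : P →ₗ[ℝ] Z) :
    IsPrimitiveOn (fun t => L (p t)) (fun t => L (S.A (p t) + S.B (g t))) I :=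
  have := FiniteDimensional.complete ℝ P
  hp.isPrimitiveOn.clm_comp hI L.toContinuousLinearMap

namespace Represents

lemma isSolution_output [CompleteSpace Z] [FiniteDimensional ℝ P] [FiniteDimensional ℝ U]
    (hS : S.Represents Δ) (hI : I.OrdConnected) (hp : S.IsTrajectory I p g) :
    Δ.IsSolution I (S.output p g) := by
  refine ⟨hp.locallyIntegrableOn_output, ?_⟩
  have hE (t : ℝ) : Δ.E (S.output p g t) = Δ.E (S.C (p t)) := by
    simpa [output] using congr($hS.E_D (g t))
  have hA (t : ℝ) : Δ.A (S.output p g t) = Δ.E (S.C (S.A (p t) + S.B (g t))) := by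
    simpa [output] using (congr($hS.E_C_A (p t) + $hS.E_C_B (g t))).symm
  simp only [hE, hA]
  exact hp.isPrimitiveOn_comp hI (Δ.E ∘ₗ S.C)

lemma exists_isTrajectory_of_isSolution [FiniteDimensional ℝ Y] [FiniteDimensional ℝ Z]
    [CompleteSpace P] (hS : S.Represents Δ) (hI : I.OrdConnected) (hy : Δ.IsSolution I y) :
    ∃ p g, S.IsTrajectory I p g ∧ y =ᵐ[volume.restrict I] S.output p g := by
  have := FiniteDimensional.complete ℝ Z
  obtain ⟨N, M, hN, hNM⟩ := hS.exists_decoder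
  have hout : ∀ᵐ t ∂volume.restrict I, S.C (N (Δ.E (y t))) + S.D (M (y t)) = y t :=
    (hy.ae_mem_wongLimit hI).mono fun t => hNM (y t)
  have hstate : (fun t => N (Δ.A (y t))) =ᵐ[volume.restrict I]
      fun t => S.A (N (Δ.E (y t))) + S.B (M (y t)) := by
    filter_upwards [hout] with t ht
    conv_lhs => rw [← ht]
    rw [map_add, ← LinearMap.comp_apply, ← hS.E_C_A, ← LinearMap.comp_apply Δ.A, ← hS.E_C_B]
    simp [hN]
  exact ⟨fun t => N (Δ.E (y t)), fun t => M (y t),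
    ⟨(N ∘ₗ Δ.E).toContinuousLinearMap.locallyIntegrableOn_comp hy.locallyIntegrableOn,
      M.toContinuousLinearMap.locallyIntegrableOn_comp hy.locallyIntegrableOn,
      (hy.isPrimitiveOn.clm_comp hI N.toContinuousLinearMap).congr_ae hI hstate⟩,
    hout.mono fun _ => Eq.symm⟩

lemma realizes [FiniteDimensional ℝ Y] [FiniteDimensional ℝ Z] [FiniteDimensional ℝ P]
    [FiniteDimensional ℝ U] (hS : S.Represents Δ) (hI : I.OrdConnected) : S.Realizes Δ I :=
  have := FiniteDimensional.complete ℝ Z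
  have := FiniteDimensional.complete ℝ P
  ⟨fun _ => hS.exists_isTrajectory_of_isSolution hI,
    fun _ _ hp => ⟨_, hS.isSolution_output hI hp, .rfl⟩⟩

end Represents

lemma exists_isTrajectory [FiniteDimensional ℝ P] [FiniteDimensional ℝ U]
    (S : LTISystem P U Y) (hg : Continuous g) (p₀ : P) :
    ∃ p, p 0 = p₀ ∧ Continuous p ∧ S.IsTrajectory univ p g := by
  have := FiniteDimensional.complete ℝ P
  have hBg : Continuous fun t => S.B (g t) := S.B.continuous_of_finiteDimensional.comp hg
  obtain ⟨p, hp₀, hderiv⟩ := exists_hasDerivAt_linear S.A.toContinuousLinearMap hBg p₀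
  have hp : Continuous p := continuous_iff_continuousAt.2 fun t => (hderiv t).continuousAt
  exact ⟨p, hp₀, hp, hp.locallyIntegrable.locallyIntegrableOn univ,
    hg.locallyIntegrable.locallyIntegrableOn univ,
    .of_hasDerivAt ((S.A.continuous_of_finiteDimensional.comp hp).add hBg) hderiv⟩

lemma exists_isTrajectory_indicator_Ici [FiniteDimensional ℝ P] [FiniteDimensional ℝ U]
    (S : LTISystem P U Y) (u : U) :
    ∃ p, S.IsTrajectory univ p ((Ici 0).indicator fun _ => u) := by
  obtain ⟨p, hp₀, hp_cont, hp⟩ := S.exists_isTrajectory (continuous_const (y := u)) 0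
  refine ⟨(Ici 0).indicator p,
    (hp_cont.locallyIntegrable.indicator measurableSet_Ici).locallyIntegrableOn univ,
    (continuous_const.locallyIntegrable.indicator measurableSet_Ici).locallyIntegrableOn univ, ?_⟩
  convert hp.isPrimitiveOn.indicator_Ici hp₀ using 2 with t
  by_cases ht : t ∈ Ici (0 : ℝ) <;> simp [ht]

end LTISystem

lemma DAE.exists_continuous_isSolution [FiniteDimensional ℝ Y] [CompleteSpace Z]
    (Δ : DAE Y Z) {s : Y} (hs : s ∈ Δ.wongLimit) :
    ∃ y, y 0 = s ∧ Continuous y ∧ Δ.IsSolution univ y := by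
  obtain ⟨k, S, hS⟩ := Δ.exists_represents_fin
  obtain ⟨N, M, -, hNM⟩ := hS.exists_decoder
  obtain ⟨p, hp₀, hp_cont, hp⟩ :=
    S.exists_isTrajectory (continuous_const (y := M s)) (N (Δ.E s))
  refine ⟨S.output p fun _ => M s, ?_, ?_, hS.isSolution_output ordConnected_univ hp⟩
  · rw [LTISystem.output, hp₀, hNM s hs]
  · exact (S.C.continuous_of_finiteDimensional.comp hp_cont).add continuous_const

namespace LTISystem.Realizes

-- A step in the input `u` would make the continuous function `E y - E C p` jump by `E D u`.
lemma E_D [FiniteDimensional ℝ P] [FiniteDimensional ℝ U] [CompleteSpace Z]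
    (hS : S.Realizes Δ univ) : Δ.E ∘ₗ S.D = 0 := by
  ext u
  obtain ⟨p, hp⟩ := S.exists_isTrajectory_indicator_Ici u
  obtain ⟨y, hy, hae⟩ := hS.2 _ _ hp
  have hcont : Continuous fun t => Δ.E (y t) - Δ.E (S.C (p t)) :=
    (continuousOn_univ.1 (hy.isPrimitiveOn.continuousOn ordConnected_univ)).sub
      (continuousOn_univ.1
        ((hp.isPrimitiveOn_comp ordConnected_univ (Δ.E ∘ₗ S.C)).continuousOn ordConnected_univ))
  refine eq_zero_of_ae_eq_indicator_Ici (a := 0) hcont ?_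
  filter_upwards [Measure.restrict_univ (μ := volume) (α := ℝ) ▸ hae] with t ht
  rw [ht, output, map_add, add_sub_cancel_left]
  by_cases ht₀ : t ∈ Ici (0 : ℝ) <;> simp [ht₀]

lemma E_apply_eq [FiniteDimensional ℝ P] [FiniteDimensional ℝ U] [CompleteSpace Z]
    (hS : S.Realizes Δ univ) (hy : Δ.IsSolution univ y) (hp : S.IsTrajectory univ p g)
    (hae : y =ᵐ[volume.restrict univ] S.output p g) (t : ℝ) :
    Δ.E (y t) = Δ.E (S.C (p t)) := by
  rw [Measure.restrict_univ] at hae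
  refine congrFun ((Continuous.ae_eq_iff_eq volume
    (continuousOn_univ.1 (hy.isPrimitiveOn.continuousOn ordConnected_univ))
    (continuousOn_univ.1 ((hp.isPrimitiveOn_comp ordConnected_univ (Δ.E ∘ₗ S.C)).continuousOn
      ordConnected_univ))).1 ?_) t
  filter_upwards [hae] with t ht
  simpa [ht, output] using congr($hS.E_D (g t))

lemma map_E_wongLimit_le [FiniteDimensional ℝ Y] [FiniteDimensional ℝ P] [FiniteDimensional ℝ U]
    [CompleteSpace Z] (hS : S.Realizes Δ univ) : Δ.wongLimit.map Δ.E ≤ (Δ.E ∘ₗ S.C).range := by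
  rintro _ ⟨s, hs, rfl⟩
  obtain ⟨y, rfl, -, hy⟩ := Δ.exists_continuous_isSolution hs
  obtain ⟨p, g, hp, hae⟩ := hS.1 y hy
  exact ⟨p 0, (hS.E_apply_eq hy hp hae 0).symm⟩

lemma E_C_injective [FiniteDimensional ℝ Y] [FiniteDimensional ℝ P] [FiniteDimensional ℝ U]
    [CompleteSpace Z] (hS : S.Realizes Δ univ)
    (hdim : Module.finrank ℝ P ≤ Module.finrank ℝ (Δ.wongLimit.map Δ.E)) :
    Function.Injective (Δ.E ∘ₗ S.C) := by
  have hrange := hdim.trans (Submodule.finrank_mono hS.map_E_wongLimit_le)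
  have hnullity := (Δ.E ∘ₗ S.C).finrank_range_add_finrank_ker
  exact LinearMap.ker_eq_bot.1 (Submodule.finrank_eq_zero.1 (by omega))

lemma E_C_state_eq [FiniteDimensional ℝ Y] [FiniteDimensional ℝ P] [FiniteDimensional ℝ U]
    [CompleteSpace Z] (hS : S.Realizes Δ univ) (p₀ : P) (u : U) :
    Δ.E (S.C (S.A p₀ + S.B u)) = Δ.A (S.C p₀ + S.D u) := by
  obtain ⟨p, rfl, hp_cont, hp⟩ := S.exists_isTrajectory (continuous_const (y := u)) p₀
  obtain ⟨y, hy, hae⟩ := hS.2 _ _ hp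
  have hEC := hp.isPrimitiveOn_comp ordConnected_univ (Δ.E ∘ₗ S.C)
  have hA : IsPrimitiveOn (fun t => Δ.E (S.C (p t))) (fun t => Δ.A (S.C (p t) + S.D u)) univ := by
    simp only [← hS.E_apply_eq hy hp hae]
    exact hy.isPrimitiveOn.congr_ae ordConnected_univ (hae.fun_comp Δ.A)
  have hderiv := hEC.ae_eq hA ordConnected_univ
  rw [Measure.restrict_univ, Continuous.ae_eq_iff_eq] at hderiv
  · exact congrFun hderiv 0
  · exact (Δ.E ∘ₗ S.C).continuous_of_finiteDimensional.comp
      ((S.A.continuous_of_finiteDimensional.comp hp_cont).add continuous_const)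
  · exact Δ.A.continuous_of_finiteDimensional.comp
      ((S.C.continuous_of_finiteDimensional.comp hp_cont).add continuous_const)

lemma wongLimit_inf_ker_le [FiniteDimensional ℝ Y] [FiniteDimensional ℝ P]
    [FiniteDimensional ℝ U] [CompleteSpace Z] (hS : S.Realizes Δ univ)
    (hinj : Function.Injective (Δ.E ∘ₗ S.C)) : Δ.wongLimit ⊓ Δ.E.ker ≤ S.D.range := by
  rintro s ⟨hs, hs_ker⟩
  obtain ⟨y, rfl, hy_cont, hy⟩ := Δ.exists_continuous_isSolution hs
  obtain ⟨p, g, hp, hae⟩ := hS.1 y hy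
  have hp_cont : Continuous p :=
    continuousOn_univ.1 (hp.isPrimitiveOn.continuousOn ordConnected_univ)
  have hp₀ : p 0 = 0 := hinj (by simpa using (hS.E_apply_eq hy hp hae 0).symm.trans hs_ker)
  have hmem : y 0 - S.C (p 0) ∈ S.D.range :=
    forall_mem_of_ae_mem (I := univ) (by simp) (Submodule.closed_of_finiteDimensional S.D.range)
      (hy_cont.sub (S.C.continuous_of_finiteDimensional.comp hp_cont)).continuousOn
      (hae.mono fun t ht => ⟨g t, by simp [ht, output]⟩) 0 trivial
  simpa [hp₀] using hmem

theorem represents [FiniteDimensional ℝ Y] [FiniteDimensional ℝ P] [FiniteDimensional ℝ U]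
    [CompleteSpace Z] (hS : S.Realizes Δ univ)
    (hdim : Module.finrank ℝ P ≤ Module.finrank ℝ (Δ.wongLimit.map Δ.E)) :
    S.Represents Δ where
  E_D := hS.E_D
  E_C_A := LinearMap.ext fun p => by simpa using hS.E_C_state_eq p 0
  E_C_B := LinearMap.ext fun u => by simpa using hS.E_C_state_eq 0 u
  E_C_injective := hS.E_C_injective hdim
  map_E_wongLimit_le := hS.map_E_wongLimit_le
  wongLimit_inf_ker_le := hS.wongLimit_inf_ker_le (hS.E_C_injective hdim)

end LTISystem.Realizes

end Behavior

section Matrices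

variable {c n m r k : ℕ} {E A : Matrix (Fin c) (Fin n) ℝ} {B : Matrix (Fin c) (Fin m) ℝ}
  {A' : Matrix (Fin r) (Fin r) ℝ} {B' : Matrix (Fin r) (Fin k) ℝ}
  {C' : Matrix (Fin n ⊕ Fin m) (Fin r) ℝ} {D' : Matrix (Fin n ⊕ Fin m) (Fin k) ℝ} {I : Set ℝ}

/-- The DAE `d(E x)/dt = A x + B u`, in the variable `Sum.elim x u`. -/
def DAE.ofMatrix (E A : Matrix (Fin c) (Fin n) ℝ) (B : Matrix (Fin c) (Fin m) ℝ) :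
    DAE (Fin n ⊕ Fin m → ℝ) (Fin c → ℝ) where
  E := (fromCols E 0).mulVecLin
  A := (fromCols A B).mulVecLin

/-- The ODE-LTI with the given matrices. -/
def LTISystem.ofMatrix (A' : Matrix (Fin r) (Fin r) ℝ) (B' : Matrix (Fin r) (Fin k) ℝ)
    (C' : Matrix (Fin n ⊕ Fin m) (Fin r) ℝ) (D' : Matrix (Fin n ⊕ Fin m) (Fin k) ℝ) :
    LTISystem (Fin r → ℝ) (Fin k → ℝ) (Fin n ⊕ Fin m → ℝ) where
  A := A'.mulVecLin
  B := B'.mulVecLin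
  C := C'.mulVecLin
  D := D'.mulVecLin

lemma ordConnected_of_isNiceInterval (hI : IsNiceInterval I) : I.OrdConnected := by
  obtain ⟨a, b, rfl⟩ | ⟨a, rfl⟩ | ⟨a, rfl⟩ | rfl := hI
  exacts [ordConnected_Icc, ordConnected_Ici, ordConnected_Iic, ordConnected_univ]

lemma rank_eq_iff_mulVec_injective {K α : Type*} [Field K] (M : Matrix α (Fin k) K) :
    M.rank = k ↔ Function.Injective M.mulVec := by
  rw [mulVec_injective_iff, linearIndependent_iff_card_eq_finrank_span, Fintype.card_fin, eq_comm,
    rank_eq_finrank_span_cols, Set.finrank]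

lemma DAE.ofMatrix_E_comp_mulVecLin (M : Matrix (Fin n ⊕ Fin m) (Fin k) ℝ) :
    (DAE.ofMatrix E A B).E ∘ₗ M.mulVecLin = (E * firstRows M).mulVecLin := by
  have hM : fromRows (firstRows M) M.toRows₂ = M := fromRows_toRows M
  refine LinearMap.ext fun v => ?_
  conv_lhs => rw [← hM]
  simp [DAE.ofMatrix, fromRows_mulVec]

lemma locallyIntegrableOn_sumElim {α β : Type*} [Fintype α] [Fintype β] {x : ℝ → α → ℝ}
    {u : ℝ → β → ℝ} :
    LocallyIntegrableOn (fun t => Sum.elim (x t) (u t)) I ↔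
      LocallyIntegrableOn x I ∧ LocallyIntegrableOn u I := by
  refine ⟨fun h => ⟨?_, ?_⟩, fun ⟨hx, hu⟩ => ?_⟩
  · exact (LinearMap.funLeft ℝ ℝ Sum.inl).toContinuousLinearMap.locallyIntegrableOn_comp h
  · exact (LinearMap.funLeft ℝ ℝ Sum.inr).toContinuousLinearMap.locallyIntegrableOn_comp h
  · let e := (LinearEquiv.sumArrowLequivProdArrow α β ℝ ℝ).symm.toLinearMap
    have hsum := ((e ∘ₗ .inl ℝ _ _).toContinuousLinearMap.locallyIntegrableOn_comp hx).add
      ((e ∘ₗ .inr ℝ _ _).toContinuousLinearMap.locallyIntegrableOn_comp hu)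
    refine hsum.congr (.of_forall fun t => ?_)
    ext (i | i) <;> simp [e]

lemma isDAESolution_iff {x : ℝ → Fin n → ℝ} {u : ℝ → Fin m → ℝ} :
    IsDAESolution E A B I x u ↔
      (DAE.ofMatrix E A B).IsSolution I fun t => Sum.elim (x t) (u t) := by
  have hE (t : ℝ) : (DAE.ofMatrix E A B).E (Sum.elim (x t) (u t)) = E *ᵥ x t := by
    simp [DAE.ofMatrix]
  have hA (t : ℝ) :
      (DAE.ofMatrix E A B).A (Sum.elim (x t) (u t)) = A *ᵥ x t + B *ᵥ u t := by
    simp [DAE.ofMatrix]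
  refine ⟨fun ⟨hx, hu, heq⟩ => ?_, fun ⟨hy, hprim⟩ => ?_⟩
  · have hy := locallyIntegrableOn_sumElim.2 ⟨hx, hu⟩
    refine ⟨hy, isPrimitiveOn_iff_forall_le.2
      ⟨(DAE.ofMatrix E A B).A.toContinuousLinearMap.locallyIntegrableOn_comp hy, ?_⟩⟩
    simpa only [hE, hA] using heq
  · have heq := (isPrimitiveOn_iff_forall_le.1 hprim).2
    simp only [hE, hA] at heq
    exact ⟨(locallyIntegrableOn_sumElim.1 hy).1, (locallyIntegrableOn_sumElim.1 hy).2, heq⟩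

lemma isStateTraj_iff {p : ℝ → Fin r → ℝ} {g : ℝ → Fin k → ℝ} :
    IsStateTraj A' B' I p g ↔ (LTISystem.ofMatrix A' B' C' D').IsTrajectory I p g := by
  refine ⟨fun ⟨hp, hg, heq⟩ => ⟨hp, hg, isPrimitiveOn_iff_forall_le.2 ⟨?_, heq⟩⟩,
    fun ⟨hp, hg, hprim⟩ => ⟨hp, hg, (isPrimitiveOn_iff_forall_le.1 hprim).2⟩⟩
  exact (A'.mulVecLin.toContinuousLinearMap.locallyIntegrableOn_comp hp).add
    (B'.mulVecLin.toContinuousLinearMap.locallyIntegrableOn_comp hg)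

lemma realizesOn_iff :
    RealizesOn E A B A' B' C' D' I ↔
      (LTISystem.ofMatrix A' B' C' D').Realizes (DAE.ofMatrix E A B) I := by
  have hsplit (y : ℝ → Fin n ⊕ Fin m → ℝ) :
      (fun t => Sum.elim (fun i => y t (Sum.inl i)) fun j => y t (Sum.inr j)) = y :=
    funext fun t => Sum.elim_comp_inl_inr (y t)
  simp only [RealizesOn, isDAESolution_iff, isStateTraj_iff (C' := C') (D' := D')]
  refine and_congr ⟨fun h y hy => ?_, fun h x u hy => h _ hy⟩
    (forall₃_congr fun p g _ => ⟨fun ⟨x, u, hy, hae⟩ => ⟨_, hy, hae⟩, fun ⟨y, hy, hae⟩ => ?_⟩)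
  · rw [← hsplit y] at hy ⊢
    exact h _ _ hy
  · rw [← hsplit y] at hy hae
    exact ⟨_, _, hy, hae⟩

lemma exists_realizesOn_finrank (E A : Matrix (Fin c) (Fin n) ℝ) (B : Matrix (Fin c) (Fin m) ℝ) :
    ∃ (r k : ℕ) (A' : Matrix (Fin r) (Fin r) ℝ) (B' : Matrix (Fin r) (Fin k) ℝ)
      (C' : Matrix (Fin n ⊕ Fin m) (Fin r) ℝ) (D' : Matrix (Fin n ⊕ Fin m) (Fin k) ℝ),
      r = Module.finrank ℝ ((DAE.ofMatrix E A B).wongLimit.map (DAE.ofMatrix E A B).E) ∧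
        RealizesOn E A B A' B' C' D' univ := by
  obtain ⟨k, S, hS⟩ := (DAE.ofMatrix E A B).exists_represents_fin
  refine ⟨_, k, S.A.toMatrix', S.B.toMatrix', S.C.toMatrix', S.D.toMatrix', rfl,
    realizesOn_iff.2 ?_⟩
  simpa only [LTISystem.ofMatrix, ← toLin'_apply', toLin'_toMatrix'] using
    hS.realizes ordConnected_univ

lemma isAssociated_of_represents
    (hS : (LTISystem.ofMatrix A' B' C' D').Represents (DAE.ofMatrix E A B))
    (hrank : (fromRows B' D').rank = k ∨ (B' = 0 ∧ D' = 0 ∧ k = 1)) :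
    IsAssociated E A B A' B' C' D' := by
  have hED : E * firstRows D' = 0 :=
    toLin'.map_eq_zero_iff.1 ((DAE.ofMatrix_E_comp_mulVecLin D').symm.trans hS.E_D)
  have hEC : (E * firstRows C').rank = r := by
    rw [rank_eq_iff_mulVec_injective, ← coe_mulVecLin,
      ← DAE.ofMatrix_E_comp_mulVecLin (A := A) (B := B)]
    exact hS.E_C_injective
  have hrn : r ≤ n :=
    hEC.symm.trans_le ((rank_mul_le_left E _).trans (rank_le_width E))
  refine ⟨hrn, ?_, hED, hEC, fun I hI =>
    realizesOn_iff.2 (hS.realizes (ordConnected_of_isNiceInterval hI))⟩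
  refine hrank.symm.imp (fun ⟨hB, hD, hk⟩ => ⟨hD, hB, hk⟩) fun hBD => ?_
  rw [rank_eq_iff_mulVec_injective, ← coe_mulVecLin, injective_iff_map_eq_zero] at hBD ⊢
  intro v hv
  have hBv : B' *ᵥ v = 0 := hS.B_eq_zero_of_D_eq_zero hv
  have hDv : D' *ᵥ v = 0 := hv
  exact hBD v (by simp [fromRows_mulVec, hBv, hDv])

end Matrices

end LTIRealization

/-- Corollary (Minimality), part 2: a minimal realization of `B_ℝ(E,A,B)` whose stacked
matrix `[B'; D']` is of full column rank, or zero with a single column, is an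
ODE-LTI associated with the DAE. -/
theorem minimal_realization_is_associated {c n m nh' k' : ℕ}
    (E A : Matrix (Fin c) (Fin n) ℝ) (B : Matrix (Fin c) (Fin m) ℝ)
    (A' : Matrix (Fin nh') (Fin nh') ℝ) (B' : Matrix (Fin nh') (Fin k') ℝ)
    (C' : Matrix (Fin n ⊕ Fin m) (Fin nh') ℝ) (D' : Matrix (Fin n ⊕ Fin m) (Fin k') ℝ)
    (hreal : RealizesOn E A B A' B' C' D' Set.univ)
    (hmin : ∀ (nh'' k'' : ℕ) (A'' : Matrix (Fin nh'') (Fin nh'') ℝ)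
      (B'' : Matrix (Fin nh'') (Fin k'') ℝ) (C'' : Matrix (Fin n ⊕ Fin m) (Fin nh'') ℝ)
      (D'' : Matrix (Fin n ⊕ Fin m) (Fin k'') ℝ),
      RealizesOn E A B A'' B'' C'' D'' Set.univ → nh' ≤ nh'')
    (hrank : (Matrix.fromRows B' D').rank = k' ∨ (B' = 0 ∧ D' = 0 ∧ k' = 1)) :
    IsAssociated E A B A' B' C' D' := by
  obtain ⟨r, k, A₀, B₀, C₀, D₀, rfl, hreal₀⟩ := LTIRealization.exists_realizesOn_finrank E A B
  have hdim := hmin _ k A₀ B₀ C₀ D₀ hreal₀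
  rw [← Module.finrank_fin_fun (R := ℝ) (n := nh')] at hdim
  have hrepr := (LTIRealization.realizesOn_iff.1 hreal).represents hdim
  exact LTIRealization.isAssociated_of_represents hrepr hrank
end

section
/- For z ∈ V(E,A,B), the DAE d(Ex)/dt = Ax + Bu is behaviorally stabilizable from z if and only if there exists a solution (x,u) on [0,∞) with Ex(0) = z and lim_{t→∞} Ex(t) = 0. -/
open MeasureTheory Set Filter Matrix

/-! Only the behaviour of a solution on each `[k, k + 1]` has to be repaired, keeping the endpoint
values of `Ev`. The endpoint pairs `(Ev(0), Ev(1))` of continuous solutions on `[0, 1]` form a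
subspace of the finite-dimensional space `Z × Z`, hence a closed one; approximating a merely locally
integrable solution by its sliding averages, which are continuous solutions, shows that it has no
further endpoint pairs. A linear section of the endpoint map over this finite-dimensional subspace
is automatically continuous, so if `Ev(k) → 0` the pairs `(Ev(k), Ev(k + 1))` are realized by
continuous pieces converging to `0` uniformly on `[0, 1]`. Their concatenation is a solution because
the values of `Ev`, unlike those of `v`, have to match at the integers. -/

section LinearSection

variable {ι V W : Type*} [AddCommGroup V] [Module ℝ V] [TopologicalSpace V]
  [IsTopologicalAddGroup V] [ContinuousSMul ℝ V] [AddCommGroup W] [Module ℝ W]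
  [TopologicalSpace W] [IsTopologicalAddGroup W] [ContinuousSMul ℝ W] [T2Space W]
  [FiniteDimensional ℝ W]

theorem exists_tendsto_zero_of_mem_map (S : Submodule ℝ V) (f : V →ₗ[ℝ] W) {l : Filter ι}
    {w : ι → W} (hmem : ∀ i, w i ∈ S.map f) (hw : Tendsto w l (nhds 0)) :
    ∃ v : ι → V, (∀ i, v i ∈ S) ∧ (∀ i, f (v i) = w i) ∧ Tendsto v l (nhds 0) := by
  obtain ⟨σ, hσ⟩ := (f.submoduleMap S).exists_rightInverse_of_surjective
    (LinearMap.range_eq_top.2 (f.submoduleMap_surjective S))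
  let L : S.map f →ₗ[ℝ] V := S.subtype ∘ₗ σ
  have hL : Continuous L := L.continuous_of_finiteDimensional
  have hw' : Tendsto (fun i => (⟨w i, hmem i⟩ : S.map f)) l (nhds 0) :=
    tendsto_subtype_rng.2 hw
  refine ⟨fun i => L ⟨w i, hmem i⟩, fun i => (σ _).2, fun i => ?_, ?_⟩
  · exact congrArg Subtype.val (LinearMap.congr_fun hσ ⟨w i, hmem i⟩)
  · simpa only [map_zero, Function.comp_def] using (hL.tendsto 0).comp hw'

end LinearSection

section LocallyIntegrable

variable {V : Type*} [NormedAddCommGroup V]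

theorem locallyIntegrable_indicator {f : ℝ → V} {s : Set ℝ} (hs : IsClosed s)
    (hf : LocallyIntegrableOn f s) : LocallyIntegrable (s.indicator f) := by
  rw [locallyIntegrable_iff]
  intro K hK
  rw [integrableOn_indicator_iff hs.measurableSet]
  exact hf.integrableOn_compact_subset inter_subset_left (hK.inter_left hs)

theorem intervalIntegrable_of_locallyIntegrableOn_s15 {f : ℝ → V} {I : Set ℝ} [I.OrdConnected]
    (hf : LocallyIntegrableOn f I) {a b : ℝ} (ha : a ∈ I) (hb : b ∈ I) :
    IntervalIntegrable f volume a b :=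
  (hf.integrableOn_compact_subset (OrdConnected.uIcc_subset ‹_› ha hb)
    isCompact_uIcc).intervalIntegrable

theorem intervalIntegrable_of_locallyIntegrable {f : ℝ → V} (hf : LocallyIntegrable f) (a b : ℝ) :
    IntervalIntegrable f volume a b :=
  (hf.integrableOn_isCompact isCompact_uIcc).intervalIntegrable

theorem locallyIntegrableOn_comp_add_const {f : ℝ → V} {I : Set ℝ} (hf : LocallyIntegrableOn f I)
    (c : ℝ) : LocallyIntegrableOn (fun t => f (t + c)) ((· + c) ⁻¹' I) := by
  intro t ht
  obtain ⟨s, hs, hfs⟩ := hf (t + c) ht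
  refine ⟨(· + c) ⁻¹' s, ?_, ?_⟩
  · exact ((continuous_add_const c).continuousWithinAt.tendsto_nhdsWithin
      (mapsTo_preimage _ _)) hs
  · exact ((measurePreserving_add_right volume c).integrableOn_comp_preimage
      (measurableEmbedding_addRight c)).2 hfs

theorem locallyIntegrableOn_Ici_zero_of_forall_Icc {f : ℝ → V}
    (hf : ∀ k : ℕ, LocallyIntegrableOn f (Icc (k : ℝ) (k + 1))) :
    LocallyIntegrableOn f (Ici 0) := by
  have hN (N : ℕ) : IntegrableOn f (Icc 0 (N : ℝ)) := by
    rw [← intervalIntegrable_iff_integrableOn_Icc_of_le N.cast_nonneg, ← Nat.cast_zero]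
    refine IntervalIntegrable.trans_iterate (a := fun k : ℕ => (k : ℝ)) fun k _ => ?_
    rw [Nat.cast_succ]
    exact intervalIntegrable_of_locallyIntegrableOn_s15 (hf k) (by simp) (by simp)
  rw [locallyIntegrableOn_iff isClosed_Ici.isLocallyClosed]
  intro K hK hKc
  obtain ⟨M, hM⟩ := hKc.bddAbove
  obtain ⟨N, hMN⟩ := exists_nat_ge M
  exact (hN N).mono_set fun s hs => ⟨hK hs, (hM hs).trans hMN⟩

theorem locallyIntegrableOn_prodMk_iff_s15 [NormedSpace ℝ V] {U : Type*} [NormedAddCommGroup U]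
    [NormedSpace ℝ U] {x : ℝ → V} {u : ℝ → U} {I : Set ℝ} :
    LocallyIntegrableOn (fun t => (x t, u t)) I ↔
      LocallyIntegrableOn x I ∧ LocallyIntegrableOn u I := by
  refine ⟨fun h => ⟨(ContinuousLinearMap.fst ℝ V U).locallyIntegrableOn_comp h,
    (ContinuousLinearMap.snd ℝ V U).locallyIntegrableOn_comp h⟩, fun ⟨hx, hu⟩ t ht => ?_⟩
  obtain ⟨s, hs, hxs⟩ := hx t ht
  obtain ⟨s', hs', hus⟩ := hu t ht
  exact ⟨s ∩ s', inter_mem hs hs',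
    (hxs.mono_set inter_subset_left).prodMk (hus.mono_set inter_subset_right)⟩

end LocallyIntegrable

section SlidingAverage

variable {V W : Type*} [NormedAddCommGroup V] [NormedSpace ℝ V] [NormedAddCommGroup W]
  [NormedSpace ℝ W]

/-- The Steklov average of `f` over the window `[t, t + h]`, a continuous function of `t` for
locally integrable `f`; it is `0` for `h = 0`. -/
noncomputable def slidingAverage (h : ℝ) (f : ℝ → V) (t : ℝ) : V := h⁻¹ • ∫ s in t..(t + h), f s

theorem slidingAverage_congr {h t : ℝ} {f g : ℝ → V} (hfg : EqOn f g (uIcc t (t + h))) :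
    slidingAverage h f t = slidingAverage h g t := by
  rw [slidingAverage, slidingAverage, intervalIntegral.integral_congr hfg]

theorem slidingAverage_eq_sub {f : ℝ → V} (hf : LocallyIntegrable f) (h : ℝ) :
    slidingAverage h f =
      fun t => h⁻¹ • ((∫ s in (0 : ℝ)..(t + h), f s) - ∫ s in (0 : ℝ)..t, f s) := by
  funext t
  rw [slidingAverage, intervalIntegral.integral_interval_sub_left] <;>
    exact intervalIntegrable_of_locallyIntegrable hf _ _

theorem continuous_slidingAverage {f : ℝ → V} (hf : LocallyIntegrable f) (h : ℝ) :
    Continuous (slidingAverage h f) := by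
  have hprim : Continuous fun t => ∫ s in (0 : ℝ)..t, f s :=
    intervalIntegral.continuous_primitive (intervalIntegrable_of_locallyIntegrable hf) 0
  rw [slidingAverage_eq_sub hf]
  fun_prop

theorem map_slidingAverage [CompleteSpace V] [CompleteSpace W] (L : V →L[ℝ] W) {f : ℝ → V}
    (hf : LocallyIntegrable f) (h t : ℝ) :
    L (slidingAverage h f t) = slidingAverage h (fun s => L (f s)) t := by
  rw [slidingAverage, map_smul, slidingAverage,
    L.intervalIntegral_comp_comm (intervalIntegrable_of_locallyIntegrable hf _ _)]

theorem map_slidingAverage_of_eqOn_Ici [CompleteSpace V] [CompleteSpace W] (L : V →L[ℝ] W)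
    {f : ℝ → V} (hf : LocallyIntegrable f) {g : ℝ → W} {a : ℝ}
    (hfg : EqOn (fun t => L (f t)) g (Ici a)) {h t : ℝ} (hh : 0 ≤ h) (ht : a ≤ t) :
    L (slidingAverage h f t) = slidingAverage h g t := by
  rw [map_slidingAverage L hf]
  refine slidingAverage_congr fun s hs => hfg ?_
  rw [uIcc_of_le (le_add_of_nonneg_right hh)] at hs
  exact ht.trans hs.1

theorem hasDerivAt_slidingAverage [CompleteSpace V] {f : ℝ → V} (hf : Continuous f) (h t : ℝ) :
    HasDerivAt (slidingAverage h f) (h⁻¹ • (f (t + h) - f t)) t := by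
  have hprim (t : ℝ) : HasDerivAt (fun t => ∫ s in (0 : ℝ)..t, f s) (f t) t :=
    hf.integral_hasStrictDerivAt 0 t |>.hasDerivAt
  rw [slidingAverage_eq_sub hf.locallyIntegrable]
  exact (((hprim (t + h)).comp_add_const t h).sub (hprim t)).const_smul _

theorem tendsto_slidingAverage [CompleteSpace V] {f : ℝ → V} (hf : Continuous f) (t : ℝ) :
    Tendsto (fun h => slidingAverage h f t) (nhdsWithin 0 (Ioi 0)) (nhds (f t)) := by
  have hprim : HasDerivAt (fun t' => ∫ s in t..t', f s) (f t) t :=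
    hf.integral_hasStrictDerivAt t t |>.hasDerivAt
  simpa only [slidingAverage, intervalIntegral.integral_same, sub_zero] using
    hprim.tendsto_slope_zero_right

end SlidingAverage

section UnitConcat

variable {V : Type*}

/-- The function on `[0, ∞)` that runs through `f 0`, `f 1`, … one unit of time each, restarting
the clock at every integer; the values `f k 1` are not used. -/
noncomputable def unitConcat (f : ℕ → ℝ → V) (t : ℝ) : V := f ⌊t⌋₊ (t - ⌊t⌋₊)

theorem unitConcat_of_mem_Ico (f : ℕ → ℝ → V) {k : ℕ} {t : ℝ} (ht : t ∈ Ico (k : ℝ) (k + 1)) :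
    unitConcat f t = f k (t - k) := by
  rw [unitConcat, (Nat.floor_eq_iff (k.cast_nonneg.trans ht.1)).2 ht]

theorem unitConcat_natCast (f : ℕ → ℝ → V) (k : ℕ) : unitConcat f k = f k 0 := by
  rw [unitConcat_of_mem_Ico f (left_mem_Ico.2 (lt_add_one _)), sub_self]

theorem tendsto_unitConcat [UniformSpace V] {f : ℕ → ℝ → V} {a : V}
    (hf : TendstoUniformlyOn f (fun _ => a) atTop (Icc 0 1)) :
    Tendsto (unitConcat f) atTop (nhds a) := by
  rw [tendstoUniformlyOn_iff_tendsto] at hf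
  have hfrac : ∀ᶠ t : ℝ in atTop, t - ⌊t⌋₊ ∈ Icc (0 : ℝ) 1 := by
    filter_upwards [eventually_ge_atTop 0] with t ht
    exact ⟨sub_nonneg.2 (Nat.floor_le ht), by linarith [Nat.lt_floor_add_one t]⟩
  exact Uniform.tendsto_nhds_right.2
    (hf.comp (tendsto_nat_floor_atTop.prodMk (tendsto_principal.2 hfrac)))

end UnitConcat

section DAE

variable {V Z : Type*} [NormedAddCommGroup V] [NormedSpace ℝ V] [NormedAddCommGroup Z]
  [NormedSpace ℝ Z]

/-- The integrated form of the homogeneous differential-algebraic equation `d(Ev)/dt = Gv` on `I`.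
An input `u` is a component of `v`: the DAE `d(Ex)/dt = Ax + Bu` is the case `v = (x, u)`. -/
structure SolvesDAE (E G : V →L[ℝ] Z) (I : Set ℝ) (v : ℝ → V) : Prop where
  locallyIntegrableOn : LocallyIntegrableOn v I
  integral_eq : ∀ t₀ ∈ I, ∀ t ∈ I, t₀ ≤ t → E (v t) = E (v t₀) + ∫ s in t₀..t, G (v s)

namespace SolvesDAE

variable {E G : V →L[ℝ] Z} {I : Set ℝ} {v w : ℝ → V}

theorem intervalIntegrable [I.OrdConnected] (hv : SolvesDAE E G I v) {a b : ℝ} (ha : a ∈ I)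
    (hb : b ∈ I) : IntervalIntegrable (fun s => G (v s)) volume a b :=
  intervalIntegrable_of_locallyIntegrableOn_s15
    (G.locallyIntegrableOn_comp hv.locallyIntegrableOn) ha hb

theorem congr_ae [I.OrdConnected] (hv : SolvesDAE E G I v) (hvw : v =ᵐ[volume.restrict I] w)
    (hE : ∀ t ∈ I, E (v t) = E (w t)) : SolvesDAE E G I w where
  locallyIntegrableOn := hv.locallyIntegrableOn.congr hvw
  integral_eq t₀ ht₀ t ht hle := by
    have hsub : uIoc t₀ t ⊆ I := uIoc_subset_uIcc.trans (OrdConnected.uIcc_subset ‹_› ht₀ ht)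
    rw [← hE t ht, ← hE t₀ ht₀, hv.integral_eq t₀ ht₀ t ht hle]
    congr 1
    refine intervalIntegral.integral_congr_ae_restrict ?_
    filter_upwards [ae_restrict_of_ae_restrict_of_subset hsub hvw] with s hs
    rw [hs]

theorem zero : SolvesDAE E G I 0 where
  locallyIntegrableOn := locallyIntegrableOn_zero
  integral_eq := by simp

theorem add [I.OrdConnected] (hv : SolvesDAE E G I v) (hw : SolvesDAE E G I w) :
    SolvesDAE E G I (v + w) where
  locallyIntegrableOn := hv.locallyIntegrableOn.add hw.locallyIntegrableOn
  integral_eq t₀ ht₀ t ht hle := by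
    simp only [Pi.add_apply, map_add, hv.integral_eq t₀ ht₀ t ht hle,
      hw.integral_eq t₀ ht₀ t ht hle]
    rw [intervalIntegral.integral_add (hv.intervalIntegrable ht₀ ht)
      (hw.intervalIntegrable ht₀ ht)]
    abel

theorem const_smul (hv : SolvesDAE E G I v) (c : ℝ) : SolvesDAE E G I (c • v) where
  locallyIntegrableOn := hv.locallyIntegrableOn.smul c
  integral_eq t₀ ht₀ t ht hle := by
    simp only [Pi.smul_apply, map_smul, intervalIntegral.integral_smul,
      hv.integral_eq t₀ ht₀ t ht hle, smul_add]

theorem mono {J : Set ℝ} (hv : SolvesDAE E G I v) (hJ : J ⊆ I) : SolvesDAE E G J v where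
  locallyIntegrableOn := hv.locallyIntegrableOn.mono_set hJ
  integral_eq t₀ ht₀ t ht hle := hv.integral_eq t₀ (hJ ht₀) t (hJ ht) hle

theorem comp_add_const (hv : SolvesDAE E G I v) (c : ℝ) :
    SolvesDAE E G ((· + c) ⁻¹' I) (fun t => v (t + c)) where
  locallyIntegrableOn := locallyIntegrableOn_comp_add_const hv.locallyIntegrableOn c
  integral_eq t₀ ht₀ t ht hle := by
    rw [intervalIntegral.integral_comp_add_right fun s => G (v s)]
    exact hv.integral_eq _ ht₀ _ ht (add_le_add_left hle c)

theorem Ici_zero_of_forall_Icc (hv : ∀ k : ℕ, SolvesDAE E G (Icc (k : ℝ) (k + 1)) v) :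
    SolvesDAE E G (Ici 0) v := by
  have hloc : LocallyIntegrableOn v (Ici 0) :=
    locallyIntegrableOn_Ici_zero_of_forall_Icc fun k => (hv k).locallyIntegrableOn
  have hint {a b : ℝ} (ha : 0 ≤ a) (hb : 0 ≤ b) :
      IntervalIntegrable (fun s => G (v s)) volume a b :=
    intervalIntegrable_of_locallyIntegrableOn_s15 (G.locallyIntegrableOn_comp hloc) ha hb
  have hextend {k : ℕ} (hk : E (v k) = E (v 0) + ∫ s in (0 : ℝ)..k, G (v s)) {t : ℝ}
      (ht : t ∈ Icc (k : ℝ) (k + 1)) : E (v t) = E (v 0) + ∫ s in (0 : ℝ)..t, G (v s) := by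
    rw [(hv k).integral_eq k (by simp) t ht ht.1, hk, add_assoc,
      intervalIntegral.integral_add_adjacent_intervals (hint le_rfl k.cast_nonneg)
        (hint k.cast_nonneg (k.cast_nonneg.trans ht.1))]
  have hnat (k : ℕ) : E (v k) = E (v 0) + ∫ s in (0 : ℝ)..k, G (v s) := by
    induction k with
    | zero => simp
    | succ k ih => exact hextend ih (by simp)
  have hreal {t : ℝ} (ht : 0 ≤ t) : E (v t) = E (v 0) + ∫ s in (0 : ℝ)..t, G (v s) :=
    hextend (hnat ⌊t⌋₊) ⟨Nat.floor_le ht, (Nat.lt_floor_add_one t).le⟩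
  refine ⟨hloc, fun t₀ ht₀ t ht _ => ?_⟩
  rw [hreal ht, hreal ht₀, add_assoc,
    intervalIntegral.integral_add_adjacent_intervals (hint le_rfl ht₀) (hint ht₀ ht)]

theorem concat {f : ℕ → ℝ → V} (hf : ∀ k, SolvesDAE E G (Icc 0 1) (f k))
    (hmatch : ∀ k, E (f k 1) = E (f (k + 1) 0)) : SolvesDAE E G (Ici 0) (unitConcat f) := by
  refine Ici_zero_of_forall_Icc fun k => ?_
  have hIco : EqOn (fun t => f k (t - k)) (unitConcat f) (Ico k (k + 1)) :=
    fun t ht => (unitConcat_of_mem_Ico f ht).symm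
  have hshift : SolvesDAE E G (Icc k (k + 1)) (fun t => f k (t - k)) := by
    simpa [sub_eq_add_neg, add_comm] using (hf k).comp_add_const (-k)
  refine hshift.congr_ae ?_ fun t ht => ?_
  · rw [← restrict_Ico_eq_restrict_Icc]
    exact ae_restrict_of_forall_mem measurableSet_Ico hIco
  · rcases ht.2.lt_or_eq with hlt | rfl
    · rw [← hIco ⟨ht.1, hlt⟩]
    · rw [add_sub_cancel_left, hmatch, ← Nat.cast_succ, unitConcat_natCast]

theorem exists_continuous_eqOn (hv : SolvesDAE E G (Ici 0) v)
    (hloc : LocallyIntegrable v) :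
    ∃ ζ : ℝ → Z, Continuous ζ ∧ EqOn (fun t => E (v t)) ζ (Ici 0) ∧
      ∀ a b, ∫ s in a..b, G (v s) = ζ b - ζ a := by
  have hint (a b : ℝ) : IntervalIntegrable (fun s => G (v s)) volume a b :=
    intervalIntegrable_of_locallyIntegrable
      (locallyIntegrableOn_univ.1 (G.locallyIntegrableOn_comp (hloc.locallyIntegrableOn univ))) a b
  refine ⟨fun t => E (v 0) + ∫ s in (0 : ℝ)..t, G (v s),
    continuous_const.add (intervalIntegral.continuous_primitive hint 0),
    fun t ht => hv.integral_eq 0 self_mem_Ici t ht ht, fun a b => ?_⟩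
  rw [add_sub_add_left_eq_sub, intervalIntegral.integral_interval_sub_left (hint _ _) (hint _ _)]

variable [CompleteSpace V]

protected theorem slidingAverage [CompleteSpace Z] (hv : SolvesDAE E G (Ici 0) v)
    (hloc : LocallyIntegrable v) {h : ℝ} (hh : 0 ≤ h) :
    SolvesDAE E G (Ici 0) (slidingAverage h v) := by
  obtain ⟨ζ, hζcont, hEζ, hGζ⟩ := hv.exists_continuous_eqOn hloc
  have hG (s : ℝ) : G (slidingAverage h v s) = h⁻¹ • (ζ (s + h) - ζ s) := by
    rw [map_slidingAverage G hloc, slidingAverage, hGζ]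
  refine ⟨(continuous_slidingAverage hloc h).locallyIntegrable.locallyIntegrableOn _,
    fun t₀ ht₀ t ht _ => ?_⟩
  have hFTC := intervalIntegral.integral_eq_sub_of_hasDerivAt (a := t₀) (b := t)
    (fun s _ => hasDerivAt_slidingAverage hζcont h s)
    (Continuous.intervalIntegrable (by fun_prop) _ _)
  simp only [hG, hFTC, map_slidingAverage_of_eqOn_Ici E hloc hEζ hh ht,
    map_slidingAverage_of_eqOn_Ici E hloc hEζ hh ht₀, add_sub_cancel]

theorem tendsto_map_slidingAverage [CompleteSpace Z] (hv : SolvesDAE E G (Ici 0) v)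
    (hloc : LocallyIntegrable v) {t : ℝ} (ht : 0 ≤ t) :
    Tendsto (fun h => E (slidingAverage h v t)) (nhdsWithin 0 (Ioi 0)) (nhds (E (v t))) := by
  obtain ⟨ζ, hζcont, hEζ, -⟩ := hv.exists_continuous_eqOn hloc
  rw [show E (v t) = ζ t from hEζ ht]
  refine (tendsto_slidingAverage hζcont t).congr' ?_
  filter_upwards [self_mem_nhdsWithin] with h hh
  exact (map_slidingAverage_of_eqOn_Ici E hloc hEζ (mem_Ioi.1 hh).le ht).symm

end SolvesDAE

/-- The solutions of `d(Ev)/dt = Gv` on `I` that are continuous functions on all of `ℝ`. -/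
def continuousSolutions (E G : V →L[ℝ] Z) (I : Set ℝ) [I.OrdConnected] : Submodule ℝ C(ℝ, V) where
  carrier := {v | SolvesDAE E G I v}
  zero_mem' := SolvesDAE.zero
  add_mem' hv hw := hv.add hw
  smul_mem' c _ hv := hv.const_smul c

/-- The pair `(Ev(0), Ev(1))` as a linear function of `v`. -/
def endpointMap (E : V →L[ℝ] Z) : C(ℝ, V) →ₗ[ℝ] Z × Z where
  toFun v := (E (v 0), E (v 1))
  map_add' v w := by simp
  map_smul' c v := by simp

namespace SolvesDAE

variable {E G : V →L[ℝ] Z} {v : ℝ → V} [CompleteSpace V] [FiniteDimensional ℝ Z]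

theorem endpoints_mem_map_continuousSolutions (hv : SolvesDAE E G (Ici 0) v) :
    (E (v 0), E (v 1)) ∈ (continuousSolutions E G (Icc 0 1)).map (endpointMap E) := by
  have : CompleteSpace Z := FiniteDimensional.complete ℝ Z
  wlog hloc : LocallyIntegrable v generalizing v
  · have hind : EqOn v ((Ici 0).indicator v) (Ici 0) := fun t ht => (indicator_of_mem ht v).symm
    have hsol := hv.congr_ae (ae_restrict_of_forall_mem measurableSet_Ici hind)
      fun t ht => congrArg E (hind ht)
    rw [hind self_mem_Ici, hind (mem_Ici.2 zero_le_one)]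
    exact this hsol (locallyIntegrable_indicator isClosed_Ici hv.locallyIntegrableOn)
  refine (Submodule.closed_of_finiteDimensional _).mem_of_tendsto
    ((hv.tendsto_map_slidingAverage hloc le_rfl).prodMk_nhds
      (hv.tendsto_map_slidingAverage hloc zero_le_one)) ?_
  filter_upwards [self_mem_nhdsWithin] with h hh
  exact ⟨⟨_, continuous_slidingAverage hloc h⟩,
    (hv.slidingAverage hloc (mem_Ioi.1 hh).le).mono Icc_subset_Ici_self, rfl⟩

theorem exists_tendsto_zero (hv : SolvesDAE E G (Ici 0) v)
    (hlim : Tendsto (fun t => E (v t)) atTop (nhds 0)) :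
    ∃ w, SolvesDAE E G (Ici 0) w ∧ E (w 0) = E (v 0) ∧ Tendsto w atTop (nhds 0) := by
  have hmem (k : ℕ) : (E (v k), E (v (k + 1))) ∈
      (continuousSolutions E G (Icc 0 1)).map (endpointMap E) := by
    have hshift := (hv.comp_add_const k).mono (J := Ici 0) fun t ht =>
      mem_Ici.2 (add_nonneg (mem_Ici.1 ht) k.cast_nonneg)
    simpa only [zero_add, add_comm (1 : ℝ)] using hshift.endpoints_mem_map_continuousSolutions
  have hends : Tendsto (fun k : ℕ => (E (v k), E (v (k + 1)))) atTop (nhds 0) :=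
    (hlim.comp tendsto_natCast_atTop_atTop).prodMk_nhds
      (hlim.comp (tendsto_atTop_add_const_right _ 1 tendsto_natCast_atTop_atTop))
  obtain ⟨p, hp, hpE, hp0⟩ := exists_tendsto_zero_of_mem_map _ _ hmem hends
  have hE0 (k : ℕ) : E (p k 0) = E (v k) := congrArg Prod.fst (hpE k)
  have hE1 (k : ℕ) : E (p k 1) = E (v (k + 1)) := congrArg Prod.snd (hpE k)
  refine ⟨unitConcat fun k => p k, SolvesDAE.concat hp fun k => ?_, ?_, ?_⟩
  · rw [hE1, hE0, Nat.cast_succ]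
  · simpa only [Nat.cast_zero, hE0] using congrArg E (unitConcat_natCast (fun k => ⇑(p k)) 0)
  · exact tendsto_unitConcat
      (ContinuousMap.tendsto_iff_forall_isCompact_tendstoUniformlyOn.1 hp0 _ isCompact_Icc)

end SolvesDAE

end DAE

section Stabilizability

variable {X U Z : Type*} [NormedAddCommGroup X] [NormedSpace ℝ X] [CompleteSpace X]
  [NormedAddCommGroup U] [NormedSpace ℝ U] [CompleteSpace U]
  [NormedAddCommGroup Z] [NormedSpace ℝ Z] [FiniteDimensional ℝ Z]

open ContinuousLinearMap in
theorem behaviorally_stabilizable_iff_Ex_tendsto_zero_general (E A : X →L[ℝ] Z) (B : U →L[ℝ] Z)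
    (z : Z) :
    (∃ (x : ℝ → X) (u : ℝ → U),
        SolvesDAE (E ∘L fst ℝ X U) (A.coprod B) (Ici 0) (fun t => (x t, u t)) ∧
        E (x 0) = z ∧ Tendsto x atTop (nhds 0)) ↔
      (∃ (x : ℝ → X) (u : ℝ → U),
        SolvesDAE (E ∘L fst ℝ X U) (A.coprod B) (Ici 0) (fun t => (x t, u t)) ∧
        E (x 0) = z ∧ Tendsto (fun t => E (x t)) atTop (nhds 0)) := by
  constructor
  · rintro ⟨x, u, hsol, h0, hx⟩
    refine ⟨x, u, hsol, h0, ?_⟩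
    simpa only [map_zero, Function.comp_def] using (E.continuous.tendsto 0).comp hx
  · rintro ⟨x, u, hsol, rfl, hEx⟩
    obtain ⟨w, hw, hw0, hwlim⟩ := hsol.exists_tendsto_zero hEx
    exact ⟨fun t => (w t).1, fun t => (w t).2, hw, hw0, (continuous_fst.tendsto 0).comp hwlim⟩

theorem isDAESolution_iff_solvesDAE {c n m : ℕ} (E A : Matrix (Fin c) (Fin n) ℝ)
    (B : Matrix (Fin c) (Fin m) ℝ) (I : Set ℝ) (x : ℝ → Fin n → ℝ) (u : ℝ → Fin m → ℝ) :
    IsDAESolution E A B I x u ↔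
      SolvesDAE (E.mulVecLin.toContinuousLinearMap ∘L ContinuousLinearMap.fst ℝ _ _)
        (A.mulVecLin.toContinuousLinearMap.coprod B.mulVecLin.toContinuousLinearMap) I
        (fun t => (x t, u t)) :=
  ⟨fun h => ⟨locallyIntegrableOn_prodMk_iff_s15.2 ⟨h.1, h.2.1⟩, h.2.2⟩,
    fun h => and_assoc.1 ⟨locallyIntegrableOn_prodMk_iff_s15.1 h.1, h.2⟩⟩

end Stabilizability

/-- Corollary (equivalent stabilizability notions): the DAE is behaviorally stabilizable
from `z` iff some solution on `[0,∞)` with `Ex(0) = z` satisfies `Ex(t) → 0`. -/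
theorem behaviorally_stabilizable_iff_Ex_tendsto_zero {c n m : ℕ}
    (E A : Matrix (Fin c) (Fin n) ℝ) (B : Matrix (Fin c) (Fin m) ℝ)
    (z : Fin c → ℝ) (hz : z ∈ ConsistencySet E A B) :
    (∃ x u, IsDAESolution E A B (Set.Ici 0) x u ∧ E.mulVec (x 0) = z ∧
        Tendsto x atTop (nhds 0)) ↔
      (∃ x u, IsDAESolution E A B (Set.Ici 0) x u ∧ E.mulVec (x 0) = z ∧
        Tendsto (fun t => E.mulVec (x t)) atTop (nhds 0)) := by
  simp only [isDAESolution_iff_solvesDAE]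
  exact behaviorally_stabilizable_iff_Ex_tendsto_zero_general
    E.mulVecLin.toContinuousLinearMap A.mulVecLin.toContinuousLinearMap
    B.mulVecLin.toContinuousLinearMap z
end

section
/- Let (A_g, B_g, C_g, D_g) be a stabilizable ODE-LTI associated with the DAE d(Ex)/dt = Ax + Bu, with Q > 0, R > 0 symmetric and S = diag(Q,R). Then the algebraic Riccati equation 0 = PA_g + A_g^T P − K^T(D_g^T S D_g)K + C_g^T S C_g, with K = (D_g^T S D_g)⁻¹(B_g^T P + D_g^T S C_g) when D_g ≠ 0 (and K = 0 when D_g = 0, in which case B_g = 0), has a unique symmetric positive definite solution P, and the matrix A_g − B_g K is Hurwitz (all eigenvalues have negative real part). -/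
open Matrix

/-- A real square matrix is Hurwitz if all its complex eigenvalues have negative real
part. -/
def IsHurwitz {l : ℕ} (M : Matrix (Fin l) (Fin l) ℝ) : Prop :=
  ∀ μ ∈ spectrum ℂ (M.map (algebraMap ℝ ℂ)), μ.re < 0

open Classical in
/-- The gain `K` associated with `P` in the algebraic Riccati equation: zero if
`D_g = 0`, and `(D_gᵀ S D_g)⁻¹ (B_gᵀ P + D_gᵀ S C_g)` otherwise. -/
noncomputable def riccatiGain {n m l k : ℕ}
    (Bg : Matrix (Fin l) (Fin k) ℝ) (Cg : Matrix (Fin n ⊕ Fin m) (Fin l) ℝ)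
    (Dg : Matrix (Fin n ⊕ Fin m) (Fin k) ℝ)
    (S : Matrix (Fin n ⊕ Fin m) (Fin n ⊕ Fin m) ℝ)
    (P : Matrix (Fin l) (Fin l) ℝ) : Matrix (Fin k) (Fin l) ℝ :=
  if Dg = 0 then 0 else (Dgᵀ * S * Dg)⁻¹ * (Bgᵀ * P + Dgᵀ * S * Cg)

/-- The algebraic Riccati equation
`0 = P A_g + A_gᵀ P − Kᵀ (D_gᵀ S D_g) K + C_gᵀ S C_g`. -/
def SatisfiesARE {n m l k : ℕ} (Ag : Matrix (Fin l) (Fin l) ℝ)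
    (Bg : Matrix (Fin l) (Fin k) ℝ) (Cg : Matrix (Fin n ⊕ Fin m) (Fin l) ℝ)
    (Dg : Matrix (Fin n ⊕ Fin m) (Fin k) ℝ)
    (S : Matrix (Fin n ⊕ Fin m) (Fin n ⊕ Fin m) ℝ)
    (P : Matrix (Fin l) (Fin l) ℝ) : Prop :=
  0 = P * Ag + Agᵀ * P -
      (riccatiGain Bg Cg Dg S P)ᵀ * (Dgᵀ * S * Dg) * riccatiGain Bg Cg Dg S P +
      Cgᵀ * S * Cg

/-!
If `A` is Hurwitz, then every `Y` with `Y A + Aᵀ Y ≤ 0` is positive semidefinite: the Cayley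
transform `T = (1 + A) (1 - A)⁻¹` turns this inequality into `Tᵀ Y T ≤ Y`, which iterates to
`0 ≤ Y` because the powers of `T` tend to zero.

Completing the square, the value at `P` of the Lyapunov equation of the feedback `F` exceeds the
Riccati residual of `P` by `(F - K)ᵀ (D_gᵀ S D_g) (F - K)`. Hence a matrix `0 ≤ P` with nonpositive
residual has a stabilizing gain and dominates every symmetric solution, which gives uniqueness.
For existence, the cost `X₀` of a stabilizing feedback has nonpositive residual. Among the matrices
between `0` and `X₀` with nonpositive residual take one of least trace: Kleinman's policy iteration
can only decrease it, so it is a fixed point, that is, a solution.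
-/

open Filter Topology

theorem tendsto_pow_atTop_nhds_zero_of_forall_spectrum_norm_lt_one {𝔸 : Type*} [NormedRing 𝔸]
    [NormedAlgebra ℂ 𝔸] [CompleteSpace 𝔸] {a : 𝔸} (ha : ∀ μ ∈ spectrum ℂ a, ‖μ‖ < 1) :
    Tendsto (fun k : ℕ ↦ a ^ k) atTop (𝓝 0) := by
  cases subsingleton_or_nontrivial 𝔸
  · exact tendsto_const_nhds.congr fun k ↦ Subsingleton.elim 0 (a ^ k)
  have hradius : spectralRadius ℂ a < (1 : NNReal) :=
    spectrum.spectralRadius_lt_of_forall_lt a ha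
  obtain ⟨r, har, hr⟩ := ENNReal.lt_iff_exists_nnreal_btwn.1 hradius
  refine squeeze_zero_norm' ?_
    (tendsto_pow_atTop_nhds_zero_of_lt_one r.coe_nonneg (by exact_mod_cast hr))
  have hgelfand := spectrum.pow_nnnorm_pow_one_div_tendsto_nhds_spectralRadius a
  filter_upwards [hgelfand.eventually_lt_const har, eventually_ne_atTop 0] with k hk hk0
  rw [one_div, ENNReal.rpow_inv_lt_iff (by positivity), ENNReal.rpow_natCast] at hk
  exact_mod_cast hk.le

theorem sub_one_div_add_one_mem_spectrum {𝕜 R : Type*} [Field 𝕜] [NeZero (2 : 𝕜)] [Ring R]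
    [Algebra 𝕜 R] {a t : R} (ha : IsUnit (1 - a)) (hat : t * (1 - a) = 1 + a) {μ : 𝕜}
    (hμ : μ ∈ spectrum 𝕜 t) : (μ - 1) / (μ + 1) ∈ spectrum 𝕜 a := by
  have hfactor : (algebraMap 𝕜 R μ - t) * (1 - a) =
      algebraMap 𝕜 R (μ - 1) - algebraMap 𝕜 R (μ + 1) * a := by
    rw [sub_mul, hat]
    simp only [map_sub, map_add, map_one]
    noncomm_ring
  have hnot : ¬IsUnit (algebraMap 𝕜 R (μ - 1) - algebraMap 𝕜 R (μ + 1) * a) := by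
    rwa [← hfactor, ha.mul_right_iff]
  have hμ1 : μ + 1 ≠ 0 := by
    intro h
    have hμ2 : μ - 1 = -2 := by linear_combination h
    refine hnot ?_
    rw [h, hμ2, map_zero, zero_mul, sub_zero]
    exact (neg_ne_zero.2 two_ne_zero).isUnit.map (algebraMap 𝕜 R)
  intro hunit
  refine hnot ?_
  convert (hμ1.isUnit.map (algebraMap 𝕜 R)).mul hunit using 1
  rw [mul_sub, ← map_mul, mul_div_cancel₀ _ hμ1]

theorem norm_lt_one_of_re_sub_one_div_add_one_neg {μ : ℂ} (h : ((μ - 1) / (μ + 1)).re < 0) :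
    ‖μ‖ < 1 := by
  have hμ1 : μ + 1 ≠ 0 := by
    intro h0
    simp [h0] at h
  rw [Complex.div_re, ← add_div, div_lt_iff₀ (Complex.normSq_pos.2 hμ1)] at h
  rw [← sq_lt_one_iff₀ (norm_nonneg μ), Complex.sq_norm, Complex.normSq_apply]
  simp only [Complex.sub_re, Complex.one_re, Complex.add_re, Complex.sub_im, Complex.one_im,
    sub_zero, Complex.add_im, add_zero, zero_mul] at h
  linarith

/-- The Cayley transform `(1 + A) (1 - A)⁻¹`, which carries continuous-time stability of `A` to
discrete-time stability. It is `0` if `1 - A` is singular, by the convention for `⁻¹`. -/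
noncomputable def cayleyTransform {n α : Type*} [Fintype n] [DecidableEq n] [CommRing α]
    (A : Matrix n n α) : Matrix n n α :=
  (1 + A) * (1 - A)⁻¹

theorem cayleyTransform_mul_one_sub {n α : Type*} [Fintype n] [DecidableEq n] [CommRing α]
    {A : Matrix n n α} (hA : IsUnit (1 - A)) : cayleyTransform A * (1 - A) = 1 + A := by
  rw [cayleyTransform, Matrix.mul_assoc, nonsing_inv_mul _ ((isUnit_iff_isUnit_det _).1 hA),
    Matrix.mul_one]

theorem isUnit_matrix_map_iff {n K L : Type*} [Fintype n] [DecidableEq n] [Field K]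
    [CommRing L] [Nontrivial L] (f : K →+* L) {M : Matrix n n K} : IsUnit (M.map f) ↔ IsUnit M := by
  rw [isUnit_iff_isUnit_det, isUnit_iff_isUnit_det, ← RingHom.mapMatrix_apply, ← RingHom.map_det,
    isUnit_map_iff]

namespace IsHurwitz

variable {l : ℕ} {A : Matrix (Fin l) (Fin l) ℝ}

theorem isUnit_one_sub_map (hA : IsHurwitz A) :
    IsUnit (1 - A.map (algebraMap ℝ ℂ)) := by
  by_contra h
  exact (zero_lt_one.trans (hA 1 (by simpa [spectrum.mem_iff] using h))).false

theorem isUnit_one_sub (hA : IsHurwitz A) : IsUnit (1 - A) := by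
  rw [← isUnit_matrix_map_iff (algebraMap ℝ ℂ)]
  simpa [Matrix.map_sub] using hA.isUnit_one_sub_map

open scoped Matrix.Norms.L2Operator in
theorem tendsto_cayleyTransform_pow (hA : IsHurwitz A) :
    Tendsto (fun k : ℕ ↦ cayleyTransform A ^ k) atTop (𝓝 0) := by
  set φ := (algebraMap ℝ ℂ).mapMatrix (m := Fin l)
  have hcayley : φ (cayleyTransform A) * (1 - φ A) = 1 + φ A := by
    simpa using congrArg φ (cayleyTransform_mul_one_sub hA.isUnit_one_sub)
  have hpow := tendsto_pow_atTop_nhds_zero_of_forall_spectrum_norm_lt_one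
    fun μ hμ ↦ norm_lt_one_of_re_sub_one_div_add_one_neg
      (hA _ (sub_one_div_add_one_mem_spectrum hA.isUnit_one_sub_map hcayley hμ))
  have hre := ((continuous_id.matrix_map Complex.continuous_re).tendsto 0).comp hpow
  have hmap (M : Matrix (Fin l) (Fin l) ℝ) : (φ M).map Complex.re = M := by
    ext i j
    simp [φ]
  simpa [Function.comp_def, ← map_pow, hmap] using hre

end IsHurwitz

section Order

open scoped MatrixOrder ComplexOrder

variable {n 𝕜 : Type*} [Finite n] [RCLike 𝕜]

theorem isClosed_setOf_posSemidef : IsClosed {M : Matrix n n 𝕜 | M.PosSemidef} := by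
  cases nonempty_fintype n
  simp only [posSemidef_iff_dotProduct_mulVec, Set.ofPred_and, Set.ofPred_forall]
  refine (isClosed_eq (by fun_prop) continuous_id).inter (isClosed_iInter fun x ↦ ?_)
  exact isClosed_le continuous_const (by fun_prop)

instance matrixOrderClosedTopology : OrderClosedTopology (Matrix n n 𝕜) where
  isClosed_le' := isClosed_setOf_posSemidef.preimage (continuous_snd.sub continuous_fst)

theorem abs_apply_le_of_posSemidef {M : Matrix n n ℝ} (hM : M.PosSemidef) (i j : n) :
    |M i j| ≤ (M i i + M j j) / 2 := by
  classical
  cases nonempty_fintype n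
  have hsymm : M j i = M i j := (isHermitian_iff_isSymm.1 hM.isHermitian).apply i j
  have hadd := hM.dotProduct_mulVec_nonneg (Pi.single i 1 + Pi.single j 1)
  have hsub := hM.dotProduct_mulVec_nonneg (Pi.single i 1 - Pi.single j 1)
  simp only [star_trivial, mulVec_add, mulVec_sub, mulVec_single, MulOpposite.op_one, one_smul,
    dotProduct_add, dotProduct_sub, add_dotProduct, sub_dotProduct, single_dotProduct, col_apply,
    one_mul, hsymm] at hadd hsub
  exact abs_le.2 ⟨by linarith, by linarith⟩

instance matrixCompactIccSpace : CompactIccSpace (Matrix n n ℝ) where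
  isCompact_Icc {A B} := by
    let box : Set (Matrix n n ℝ) := Set.univ.pi fun i ↦ Set.univ.pi fun j ↦
      Metric.closedBall (A i j) (((B - A) i i + (B - A) j j) / 2)
    have hbox : IsCompact box :=
      isCompact_univ_pi fun i ↦ isCompact_univ_pi fun j ↦ isCompact_closedBall _ _
    refine hbox.of_isClosed_subset isClosed_Icc ?_
    rintro M ⟨hAM, hMB⟩ i - j -
    rw [mem_closedBall_iff_norm]
    refine (abs_apply_le_of_posSemidef hAM i j).trans ?_
    have hi := (le_iff.1 hMB).diag_nonneg (i := i)
    have hj := (le_iff.1 hMB).diag_nonneg (i := j)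
    simp only [Matrix.sub_apply] at hi hj ⊢
    linarith

theorem isSymm_of_nonneg {n : Type*} {M : Matrix n n ℝ} (hM : 0 ≤ M) : M.IsSymm :=
  isHermitian_iff_isSymm.1 (nonneg_iff_posSemidef.1 hM).isHermitian

theorem eq_of_le_of_trace_le {n : Type*} [Fintype n] {A B : Matrix n n 𝕜} (hAB : A ≤ B)
    (h : B.trace ≤ A.trace) : A = B := by
  have htrace : (B - A).trace = 0 :=
    le_antisymm (by rwa [trace_sub, sub_nonpos]) (le_iff.1 hAB).trace_nonneg
  exact (sub_eq_zero.1 ((le_iff.1 hAB).trace_eq_zero_iff.1 htrace)).symm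

theorem posSemidef_map_algebraMap {M : Matrix n n ℝ} (hM : M.PosSemidef) :
    (M.map (algebraMap ℝ 𝕜)).PosSemidef := by
  classical
  cases nonempty_fintype n
  obtain ⟨B, rfl⟩ := CStarAlgebra.nonneg_iff_eq_star_mul_self.1 hM.nonneg
  convert posSemidef_conjTranspose_mul_self (B.map (algebraMap ℝ 𝕜)) using 1
  rw [Matrix.map_mul, star_eq_conjTranspose, conjTranspose_map]
  exact fun x ↦ by simp

theorem posDef_map_algebraMap {M : Matrix n n ℝ} (hM : M.PosDef) :
    (M.map (algebraMap ℝ 𝕜)).PosDef := by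
  classical
  cases nonempty_fintype n
  exact (posSemidef_map_algebraMap hM.posSemidef).posDef_iff_isUnit.2
    ((isUnit_matrix_map_iff _).2 hM.isUnit)

theorem posDef_fromBlocks_zero {m : Type*} [Finite m] {A : Matrix m m 𝕜} {D : Matrix n n 𝕜}
    (hA : A.PosDef) (hD : D.PosDef) : (fromBlocks A 0 0 D).PosDef := by
  classical
  cases nonempty_fintype m
  cases nonempty_fintype n
  have := hA.isUnit.invertible
  have hpos : (fromBlocks A 0 0 D).PosSemidef := by
    simpa using (PosDef.fromBlocks₁₁ 0 D hA).2 (by simpa using hD.posSemidef)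
  rw [hpos.posDef_iff_isUnit, isUnit_iff_isUnit_det, det_fromBlocks_zero₂₁, IsUnit.mul_iff]
  simpa only [← isUnit_iff_isUnit_det] using And.intro hA.isUnit hD.isUnit

theorem star_pow_mul_mul_pow_le {R : Type*} [Ring R] [StarRing R] [PartialOrder R]
    [StarOrderedRing R] {t y : R} (h : star t * y * t ≤ y) (k : ℕ) :
    star (t ^ k) * y * t ^ k ≤ y := by
  induction k with
  | zero => simp
  | succ k ih =>
    calc star (t ^ (k + 1)) * y * t ^ (k + 1)
        = star t * (star (t ^ k) * y * t ^ k) * t := by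
          rw [pow_succ, star_mul]
          simp only [mul_assoc]
      _ ≤ star t * y * t := star_left_conjugate_le_conjugate ih t
      _ ≤ y := h

end Order

section Lyapunov

open scoped MatrixOrder ComplexOrder

/-- The Lyapunov operator `X ↦ X A + Aᵀ X`: the derivative of `xᵀ X x` along `x' = A x` is the
quadratic form of `lyapunov A X`. -/
def lyapunov {n R : Type*} [Fintype n] [CommRing R] (A : Matrix n n R) :
    Matrix n n R →ₗ[R] Matrix n n R :=
  LinearMap.mulRight R A + LinearMap.mulLeft R Aᵀ

theorem lyapunov_apply {n R : Type*} [Fintype n] [CommRing R] (A X : Matrix n n R) :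
    lyapunov A X = X * A + Aᵀ * X :=
  rfl

theorem one_add_conj_sub_one_sub_conj {n R : Type*} [Fintype n] [DecidableEq n] [CommRing R]
    (A X : Matrix n n R) :
    (1 + A)ᵀ * X * (1 + A) - (1 - A)ᵀ * X * (1 - A) = 2 • lyapunov A X := by
  rw [lyapunov_apply, transpose_add, transpose_sub, transpose_one]
  noncomm_ring

theorem cayleyTransform_conj_le {n : Type*} [Fintype n] [DecidableEq n] {A Y : Matrix n n ℝ}
    (hA : IsUnit (1 - A)) (hY : lyapunov A Y ≤ 0) :
    star (cayleyTransform A) * Y * cayleyTransform A ≤ Y := by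
  have hstein : star (1 - A) * (Y - star (cayleyTransform A) * Y * cayleyTransform A) * (1 - A) =
      2 • -lyapunov A Y := by
    calc _ = star (1 - A) * Y * (1 - A) -
        star (cayleyTransform A * (1 - A)) * Y * (cayleyTransform A * (1 - A)) := by
          rw [star_mul (cayleyTransform A)]
          noncomm_ring
      _ = 2 • -lyapunov A Y := by
          rw [cayleyTransform_mul_one_sub hA, smul_neg, ← one_add_conj_sub_one_sub_conj, neg_sub]
          simp only [star_eq_conjTranspose, conjTranspose_eq_transpose_of_trivial]
  rw [le_iff, ← hA.posSemidef_star_left_conjugate_iff, hstein, ← nonneg_iff_posSemidef]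
  exact nsmul_nonneg (neg_nonneg.2 hY) 2

namespace IsHurwitz

variable {l : ℕ} {A : Matrix (Fin l) (Fin l) ℝ}

theorem nonneg_of_lyapunov_nonpos {Y : Matrix (Fin l) (Fin l) ℝ} (hA : IsHurwitz A)
    (hY : lyapunov A Y ≤ 0) : 0 ≤ Y := by
  have hlim : Tendsto (fun k : ℕ ↦ star (cayleyTransform A ^ k) * Y * cayleyTransform A ^ k)
      atTop (𝓝 (star 0 * Y * 0)) :=
    (hA.tendsto_cayleyTransform_pow.star.mul_const Y).mul hA.tendsto_cayleyTransform_pow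
  rw [mul_zero] at hlim
  exact le_of_tendsto' hlim
    (star_pow_mul_mul_pow_le (cayleyTransform_conj_le hA.isUnit_one_sub hY))

theorem lyapunov_injective (hA : IsHurwitz A) : Function.Injective (lyapunov A) := by
  refine (injective_iff_map_eq_zero _).2 fun X hX ↦ le_antisymm ?_ ?_
  · exact neg_nonneg.1 (hA.nonneg_of_lyapunov_nonpos (by rw [map_neg, hX, neg_zero]))
  · exact hA.nonneg_of_lyapunov_nonpos hX.le

theorem exists_lyapunov_add_eq_zero (hA : IsHurwitz A) {N : Matrix (Fin l) (Fin l) ℝ}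
    (hN : 0 ≤ N) : ∃ X, 0 ≤ X ∧ lyapunov A X + N = 0 := by
  obtain ⟨X, hX⟩ := LinearMap.injective_iff_surjective.1 hA.lyapunov_injective (-N)
  refine ⟨X, hA.nonneg_of_lyapunov_nonpos ?_, by rw [hX, neg_add_cancel]⟩
  rw [hX]
  exact neg_nonpos.2 hN

end IsHurwitz

theorem re_neg_of_mem_spectrum_of_mul_add_mul_add_nonpos {n 𝕜 : Type*} [Fintype n]
    [DecidableEq n] [RCLike 𝕜] {A P Q : Matrix n n 𝕜} (hP : 0 ≤ P) (hQ : Q.PosDef)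
    (h : P * A + Aᴴ * P + Q ≤ 0) {μ : 𝕜} (hμ : μ ∈ spectrum 𝕜 A) : RCLike.re μ < 0 := by
  rw [← spectrum_toLin', ← Module.End.hasEigenvalue_iff_mem_spectrum] at hμ
  obtain ⟨v, hv⟩ := hμ.exists_hasEigenvector
  have hAv : A *ᵥ v = μ • v := by simpa using hv.apply_eq_smul
  have hform : star v ⬝ᵥ (P * A + Aᴴ * P + Q) *ᵥ v =
      (μ + star μ) * (star v ⬝ᵥ P *ᵥ v) + star v ⬝ᵥ Q *ᵥ v := by
    have hvA : star v ᵥ* Aᴴ = star μ • star v := by rw [← star_mulVec, hAv, star_smul]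
    simp only [add_mulVec, ← mulVec_mulVec, dotProduct_add, hAv, mulVec_smul, dotProduct_smul]
    rw [dotProduct_mulVec _ Aᴴ, hvA, smul_dotProduct]
    simp only [smul_eq_mul]
    ring
  have hPv := (nonneg_iff_posSemidef.1 hP).dotProduct_mulVec_nonneg v
  have hQv := hQ.dotProduct_mulVec_pos hv.2
  have hle := (nonneg_iff_posSemidef.1 (neg_nonneg.2 h)).dotProduct_mulVec_nonneg v
  rw [neg_mulVec, dotProduct_neg, neg_nonneg, hform] at hle
  obtain ⟨p, hp0, hp⟩ := RCLike.nonneg_iff_exists_ofReal.1 hPv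
  obtain ⟨q, hq0, hq⟩ := RCLike.pos_iff_exists_ofReal.1 hQv
  rw [← hp, ← hq, RCLike.star_def, RCLike.add_conj] at hle
  have hreal : 2 * RCLike.re μ * p + q ≤ 0 := by exact_mod_cast hle
  by_contra! hμ0
  nlinarith [mul_nonneg hμ0 hp0]

theorem isHurwitz_of_lyapunov_add_nonpos {l : ℕ} {A P Q : Matrix (Fin l) (Fin l) ℝ}
    (hP : 0 ≤ P) (hQ : Q.PosDef) (h : lyapunov A P + Q ≤ 0) : IsHurwitz A := by
  intro μ hμ
  refine re_neg_of_mem_spectrum_of_mul_add_mul_add_nonpos (𝕜 := ℂ)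
    (posSemidef_map_algebraMap (nonneg_iff_posSemidef.1 hP)).nonneg (posDef_map_algebraMap hQ) ?_ hμ
  have hmap := (posSemidef_map_algebraMap (𝕜 := ℂ) (le_iff.1 h)).nonneg
  have hstar : (A.map (algebraMap ℝ ℂ))ᴴ = Aᵀ.map (algebraMap ℝ ℂ) := by
    ext
    simp
  rw [hstar, ← neg_nonneg]
  simpa only [lyapunov_apply, zero_sub, ← RingHom.mapMatrix_apply, map_neg, map_add, map_mul]
    using hmap

theorem posDef_of_lyapunov_add_nonpos {n : Type*} [Fintype n] {A P Q : Matrix n n ℝ}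
    (hP : 0 ≤ P) (hQ : Q.PosDef) (h : lyapunov A P + Q ≤ 0) : P.PosDef := by
  have hP' := nonneg_iff_posSemidef.1 hP
  refine .of_dotProduct_mulVec_pos hP'.isHermitian fun x hx ↦
    (hP'.dotProduct_mulVec_nonneg x).lt_of_ne' fun hzero ↦ ?_
  have hPx : P *ᵥ x = 0 := (hP'.dotProduct_mulVec_zero_iff x).1 hzero
  have hxP : star x ᵥ* P = 0 := by rw [← hP'.isHermitian.eq, ← star_mulVec, hPx, star_zero]
  have hle := (nonneg_iff_posSemidef.1 (neg_nonneg.2 h)).dotProduct_mulVec_nonneg x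
  rw [neg_mulVec, dotProduct_neg, neg_nonneg, lyapunov_apply, add_mulVec, add_mulVec,
    ← mulVec_mulVec, ← mulVec_mulVec, hPx, mulVec_zero, add_zero, dotProduct_add,
    dotProduct_mulVec, hxP, zero_dotProduct, zero_add] at hle
  exact hle.not_gt (hQ.dotProduct_mulVec_pos hx)

end Lyapunov

theorem mulVec_injective_of_rank_eq_card {m n K : Type*} [Finite m] [Fintype n] [Field K]
    {M : Matrix m n K} (hM : M.rank = Fintype.card n) : Function.Injective M.mulVec := by
  cases nonempty_fintype m
  rw [mulVec_injective_iff, linearIndependent_iff_card_eq_finrank_span, ← hM,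
    rank_eq_finrank_span_cols]
  rfl

theorem eq_zero_of_mulVec_eq_mulVec {c m n p K : Type*} [Finite c] [Fintype m] [Fintype n]
    [Fintype p] [Field K] {E : Matrix c m K} {C : Matrix m n K} {D : Matrix m p K} {x : n → K}
    {u : p → K} (hED : E * D = 0) (hEC : (E * C).rank = Fintype.card n) (h : C *ᵥ x = D *ᵥ u) :
    x = 0 := by
  refine mulVec_injective_of_rank_eq_card hEC (?_ : _ *ᵥ x = _ *ᵥ 0)
  rw [← mulVec_mulVec, h, mulVec_mulVec, hED, zero_mulVec, mulVec_zero]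

section Riccati

open scoped MatrixOrder

variable {n m l k : ℕ} {Ag : Matrix (Fin l) (Fin l) ℝ} {Bg : Matrix (Fin l) (Fin k) ℝ}
  {Cg : Matrix (Fin n ⊕ Fin m) (Fin l) ℝ} {Dg : Matrix (Fin n ⊕ Fin m) (Fin k) ℝ}
  {S : Matrix (Fin n ⊕ Fin m) (Fin n ⊕ Fin m) ℝ} {F : Matrix (Fin k) (Fin l) ℝ}
  {P P' : Matrix (Fin l) (Fin l) ℝ}

variable (Ag Bg Cg Dg S P) in
/-- The right-hand side of the algebraic Riccati equation. The matrices `0 ≤ P` at which it is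
nonpositive play the role of super-solutions. -/
noncomputable def riccatiResidual : Matrix (Fin l) (Fin l) ℝ :=
  lyapunov Ag P - (riccatiGain Bg Cg Dg S P)ᵀ * (Dgᵀ * S * Dg) * riccatiGain Bg Cg Dg S P +
    Cgᵀ * S * Cg

variable (Cg Dg S F) in
/-- The matrix of the running cost `x ↦ zᵀ S z`, where `z = C_g x + D_g u`, under the feedback
`u = -F x`. -/
def closedLoopCost : Matrix (Fin l) (Fin l) ℝ :=
  (Cg - Dg * F)ᵀ * S * (Cg - Dg * F)

theorem satisfiesARE_iff_riccatiResidual_eq_zero :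
    SatisfiesARE Ag Bg Cg Dg S P ↔ riccatiResidual Ag Bg Cg Dg S P = 0 :=
  eq_comm

theorem mul_riccatiGain (hS : S.PosDef) (hD : Dg.rank = k ∨ (Dg = 0 ∧ Bg = 0)) :
    Dgᵀ * S * Dg * riccatiGain Bg Cg Dg S P = Bgᵀ * P + Dgᵀ * S * Cg := by
  by_cases hD0 : Dg = 0
  · have hB0 : Bg = 0 := by
      rcases hD with hrank | ⟨-, hB0⟩
      · obtain rfl : 0 = k := by rw [← hrank, hD0, rank_zero]
        exact Subsingleton.elim _ _
      · exact hB0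
    simp [hD0, hB0]
  · have hrank : Dg.rank = Fintype.card (Fin k) := by simpa [hD0] using hD
    have hposDef : (Dgᵀ * S * Dg).PosDef :=
      hS.conjTranspose_mul_mul_same (mulVec_injective_of_rank_eq_card hrank)
    rw [riccatiGain, if_neg hD0,
      mul_nonsing_inv_cancel_left _ _ ((isUnit_iff_isUnit_det _).1 hposDef.isUnit)]

theorem continuous_riccatiResidual : Continuous (riccatiResidual Ag Bg Cg Dg S) := by
  have hgain : Continuous (riccatiGain Bg Cg Dg S) := by
    unfold riccatiGain
    split_ifs <;> fun_prop
  unfold riccatiResidual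
  simp only [lyapunov_apply]
  fun_prop

theorem posDef_closedLoopCost (hS : S.PosDef) (hCD : ∀ x u, Cg *ᵥ x = Dg *ᵥ u → x = 0) :
    (closedLoopCost Cg Dg S F).PosDef := by
  refine hS.conjTranspose_mul_mul_same
    ((injective_iff_map_eq_zero (mulVecLin (Cg - Dg * F))).2 fun x hx ↦ ?_)
  rw [mulVecLin_apply, sub_mulVec, ← mulVec_mulVec, sub_eq_zero] at hx
  exact hCD x _ hx

theorem lyapunov_add_closedLoopCost (hS : S.PosDef) (hD : Dg.rank = k ∨ (Dg = 0 ∧ Bg = 0))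
    (hP : P.IsSymm) :
    lyapunov (Ag - Bg * F) P + closedLoopCost Cg Dg S F = riccatiResidual Ag Bg Cg Dg S P +
      (F - riccatiGain Bg Cg Dg S P)ᵀ * (Dgᵀ * S * Dg) * (F - riccatiGain Bg Cg Dg S P) := by
  have hSsymm : S.IsSymm := isHermitian_iff_isSymm.1 hS.isHermitian
  have hK := mul_riccatiGain (Cg := Cg) (P := P) hS hD
  have hleft := congrArg (Fᵀ * ·) hK
  have hright := congrArg (·ᵀ * F) hK
  simp only [transpose_mul, transpose_add, transpose_transpose, hSsymm.eq, hP.eq, Matrix.mul_add,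
    Matrix.add_mul, Matrix.mul_assoc] at hleft hright
  simp only [riccatiResidual, closedLoopCost, lyapunov_apply, transpose_mul, transpose_sub,
    Matrix.mul_sub, Matrix.sub_mul, Matrix.mul_assoc]
  linear_combination (norm := module) hleft + hright

theorem riccatiResidual_le_lyapunov_add (hS : S.PosDef)
    (hD : Dg.rank = k ∨ (Dg = 0 ∧ Bg = 0)) (hP : P.IsSymm) :
    riccatiResidual Ag Bg Cg Dg S P ≤ lyapunov (Ag - Bg * F) P + closedLoopCost Cg Dg S F := by
  rw [lyapunov_add_closedLoopCost hS hD hP, le_add_iff_nonneg_right, nonneg_iff_posSemidef]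
  exact (hS.posSemidef.conjTranspose_mul_mul_same Dg).conjTranspose_mul_mul_same _

theorem lyapunov_add_closedLoopCost_riccatiGain (hS : S.PosDef)
    (hD : Dg.rank = k ∨ (Dg = 0 ∧ Bg = 0)) (hP : P.IsSymm) :
    lyapunov (Ag - Bg * riccatiGain Bg Cg Dg S P) P +
      closedLoopCost Cg Dg S (riccatiGain Bg Cg Dg S P) = riccatiResidual Ag Bg Cg Dg S P := by
  rw [lyapunov_add_closedLoopCost hS hD hP, sub_self, Matrix.mul_zero, add_zero]

theorem isHurwitz_of_riccatiResidual_nonpos (hS : S.PosDef)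
    (hD : Dg.rank = k ∨ (Dg = 0 ∧ Bg = 0)) (hCD : ∀ x u, Cg *ᵥ x = Dg *ᵥ u → x = 0)
    (hP : 0 ≤ P) (hres : riccatiResidual Ag Bg Cg Dg S P ≤ 0) :
    IsHurwitz (Ag - Bg * riccatiGain Bg Cg Dg S P) :=
  isHurwitz_of_lyapunov_add_nonpos hP (posDef_closedLoopCost hS hCD)
    ((lyapunov_add_closedLoopCost_riccatiGain hS hD (isSymm_of_nonneg hP)).trans_le hres)

theorem posDef_of_riccatiResidual_nonpos (hS : S.PosDef)
    (hD : Dg.rank = k ∨ (Dg = 0 ∧ Bg = 0)) (hCD : ∀ x u, Cg *ᵥ x = Dg *ᵥ u → x = 0)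
    (hP : 0 ≤ P) (hres : riccatiResidual Ag Bg Cg Dg S P ≤ 0) : P.PosDef :=
  posDef_of_lyapunov_add_nonpos hP (posDef_closedLoopCost hS hCD)
    ((lyapunov_add_closedLoopCost_riccatiGain hS hD (isSymm_of_nonneg hP)).trans_le hres)

theorem le_of_riccatiResidual_nonpos_of_nonneg (hS : S.PosDef)
    (hD : Dg.rank = k ∨ (Dg = 0 ∧ Bg = 0)) (hCD : ∀ x u, Cg *ᵥ x = Dg *ᵥ u → x = 0)
    (hP : 0 ≤ P) (hres : riccatiResidual Ag Bg Cg Dg S P ≤ 0) (hP' : P'.IsSymm)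
    (hres' : 0 ≤ riccatiResidual Ag Bg Cg Dg S P') : P' ≤ P := by
  have hA := isHurwitz_of_riccatiResidual_nonpos hS hD hCD hP hres
  refine sub_nonneg.1 (hA.nonneg_of_lyapunov_nonpos ?_)
  rw [map_sub, sub_nonpos, ← add_le_add_iff_right (closedLoopCost Cg Dg S _),
    lyapunov_add_closedLoopCost_riccatiGain hS hD (isSymm_of_nonneg hP)]
  exact hres.trans (hres'.trans (riccatiResidual_le_lyapunov_add hS hD hP'))

theorem exists_lyapunov_add_closedLoopCost_eq_zero (hS : S.PosDef)
    (hF : IsHurwitz (Ag - Bg * F)) :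
    ∃ X, 0 ≤ X ∧ lyapunov (Ag - Bg * F) X + closedLoopCost Cg Dg S F = 0 :=
  hF.exists_lyapunov_add_eq_zero (hS.posSemidef.conjTranspose_mul_mul_same _).nonneg

-- One step of Kleinman's policy iteration: `X` is the cost of the feedback with gain `K(P)`.
theorem exists_le_riccatiResidual_nonpos (hS : S.PosDef)
    (hD : Dg.rank = k ∨ (Dg = 0 ∧ Bg = 0)) (hCD : ∀ x u, Cg *ᵥ x = Dg *ᵥ u → x = 0)
    (hP : 0 ≤ P) (hres : riccatiResidual Ag Bg Cg Dg S P ≤ 0) :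
    ∃ X, 0 ≤ X ∧ X ≤ P ∧ riccatiResidual Ag Bg Cg Dg S X ≤ 0 ∧
      (X = P → riccatiResidual Ag Bg Cg Dg S P = 0) := by
  have hA := isHurwitz_of_riccatiResidual_nonpos hS hD hCD hP hres
  have hgain := lyapunov_add_closedLoopCost_riccatiGain (Ag := Ag) (Cg := Cg) hS hD
    (isSymm_of_nonneg hP)
  obtain ⟨X, hX, hX0⟩ := exists_lyapunov_add_closedLoopCost_eq_zero (Cg := Cg) (Dg := Dg) hS hA
  refine ⟨X, hX, ?_, ?_, ?_⟩
  · refine sub_nonneg.1 (hA.nonneg_of_lyapunov_nonpos ?_)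
    rw [map_sub, sub_nonpos, ← add_le_add_iff_right (closedLoopCost Cg Dg S _), hX0, hgain]
    exact hres
  · exact hX0 ▸ riccatiResidual_le_lyapunov_add hS hD (isSymm_of_nonneg hX)
  · rintro rfl
    exact hgain.symm.trans hX0

theorem exists_riccatiResidual_eq_zero (hS : S.PosDef)
    (hD : Dg.rank = k ∨ (Dg = 0 ∧ Bg = 0)) (hCD : ∀ x u, Cg *ᵥ x = Dg *ᵥ u → x = 0)
    (hF : IsHurwitz (Ag - Bg * F)) : ∃ P, 0 ≤ P ∧ riccatiResidual Ag Bg Cg Dg S P = 0 := by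
  obtain ⟨X₀, hX₀, hX₀0⟩ := exists_lyapunov_add_closedLoopCost_eq_zero (Cg := Cg) (Dg := Dg) hS hF
  have hcompact : IsCompact (Set.Icc 0 X₀ ∩ {P | riccatiResidual Ag Bg Cg Dg S P ≤ 0}) :=
    isCompact_Icc.inter_right (isClosed_le continuous_riccatiResidual continuous_const)
  have hX₀mem : X₀ ∈ Set.Icc 0 X₀ ∩ {P | riccatiResidual Ag Bg Cg Dg S P ≤ 0} :=
    ⟨⟨hX₀, le_rfl⟩, hX₀0 ▸ riccatiResidual_le_lyapunov_add hS hD (isSymm_of_nonneg hX₀)⟩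
  obtain ⟨P, ⟨⟨hP, hPX₀⟩, hres⟩, hmin⟩ :=
    hcompact.exists_isMinOn ⟨X₀, hX₀mem⟩ continuous_id.matrix_trace.continuousOn
  obtain ⟨X, hX, hXP, hXres, hfix⟩ := exists_le_riccatiResidual_nonpos hS hD hCD hP hres
  exact ⟨P, hP, hfix (eq_of_le_of_trace_le hXP (hmin ⟨⟨hX, hXP.trans hPX₀⟩, hXres⟩))⟩

theorem are_unique_posdef_solution_general (hS : S.PosDef)
    (hstab : ∃ F : Matrix (Fin k) (Fin l) ℝ, IsHurwitz (Ag + Bg * F))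
    (hDrank : Dg.rank = k ∨ (Dg = 0 ∧ Bg = 0)) (hCD : ∀ x u, Cg *ᵥ x = Dg *ᵥ u → x = 0) :
    ∃ P : Matrix (Fin l) (Fin l) ℝ,
      (P.PosDef ∧ SatisfiesARE Ag Bg Cg Dg S P ∧
        IsHurwitz (Ag - Bg * riccatiGain Bg Cg Dg S P)) ∧
      ∀ P' : Matrix (Fin l) (Fin l) ℝ,
        P'.PosSemidef → SatisfiesARE Ag Bg Cg Dg S P' → P' = P := by
  simp only [satisfiesARE_iff_riccatiResidual_eq_zero]
  obtain ⟨F, hF⟩ := hstab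
  obtain ⟨P, hP, hres⟩ := exists_riccatiResidual_eq_zero (F := -F) hS hDrank hCD
    (by rwa [Matrix.mul_neg, sub_neg_eq_add])
  refine ⟨P, ⟨posDef_of_riccatiResidual_nonpos hS hDrank hCD hP hres.le, hres,
    isHurwitz_of_riccatiResidual_nonpos hS hDrank hCD hP hres.le⟩, fun P' hP' hres' ↦ ?_⟩
  exact le_antisymm
    (le_of_riccatiResidual_nonpos_of_nonneg hS hDrank hCD hP hres.le
      (isSymm_of_nonneg hP'.nonneg) hres'.ge)
    (le_of_riccatiResidual_nonpos_of_nonneg hS hDrank hCD hP'.nonneg hres'.le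
      (isSymm_of_nonneg hP) hres.ge)

end Riccati

/-- Lemma (ARE solvability): for a stabilizable ODE-LTI associated with the DAE (so
`(A_g, B_g)` stabilizable, `D_g` of full column rank or zero with `B_g = 0`, `E D̂_s = 0`
and `E Ĉ_s` injective), with `Q > 0`, `R > 0` symmetric and `S = diag(Q, R)`, the ARE
has a unique symmetric positive definite solution `P`, and `A_g − B_g K` is Hurwitz. -/
theorem are_unique_posdef_solution {c n m l k : ℕ}
    (E : Matrix (Fin c) (Fin n) ℝ)
    (Ag : Matrix (Fin l) (Fin l) ℝ) (Bg : Matrix (Fin l) (Fin k) ℝ)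
    (Cg : Matrix (Fin n ⊕ Fin m) (Fin l) ℝ) (Dg : Matrix (Fin n ⊕ Fin m) (Fin k) ℝ)
    (Q : Matrix (Fin n) (Fin n) ℝ) (R : Matrix (Fin m) (Fin m) ℝ)
    (hQsym : Q.IsSymm) (hRsym : R.IsSymm) (hQ : Q.PosDef) (hR : R.PosDef)
    (hstab : ∃ F : Matrix (Fin k) (Fin l) ℝ, IsHurwitz (Ag + Bg * F))
    (hDrank : Dg.rank = k ∨ (Dg = 0 ∧ Bg = 0 ∧ k = 1))
    (hEDs : E * (Matrix.of fun i j => Dg (Sum.inl i) j) = 0)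
    (hECs : (E * (Matrix.of fun i j => Cg (Sum.inl i) j)).rank = l) :
    ∃ P : Matrix (Fin l) (Fin l) ℝ,
      (P.IsSymm ∧ P.PosDef ∧ SatisfiesARE Ag Bg Cg Dg (Matrix.fromBlocks Q 0 0 R) P ∧
        IsHurwitz (Ag - Bg * riccatiGain Bg Cg Dg (Matrix.fromBlocks Q 0 0 R) P)) ∧
      ∀ P' : Matrix (Fin l) (Fin l) ℝ,
        P'.IsSymm → P'.PosDef → SatisfiesARE Ag Bg Cg Dg (Matrix.fromBlocks Q 0 0 R) P' →
        P' = P := by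
  have hCD (x : Fin l → ℝ) (u : Fin k → ℝ) (h : Cg *ᵥ x = Dg *ᵥ u) : x = 0 :=
    eq_zero_of_mulVec_eq_mulVec hEDs (hECs.trans (Fintype.card_fin l).symm)
      (funext fun i ↦ congrFun h (Sum.inl i))
  obtain ⟨P, ⟨hP, hARE, hHurwitz⟩, huniq⟩ := are_unique_posdef_solution_general
    (posDef_fromBlocks_zero hQ hR) hstab (hDrank.imp_right fun h ↦ ⟨h.1, h.2.1⟩) hCD
  exact ⟨P, ⟨isHermitian_iff_isSymm.1 hP.isHermitian, hP, hARE, hHurwitz⟩,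
    fun P' _ hP' ↦ huniq P' hP'.posSemidef⟩
end
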